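/- Let d ≥ 2 and ℓ ≥ 0 be integers. Every r > 0 such that (Ξ_ℓ^{(d)})'(r) = 0 is a transcendental number (i.e. r is not a root of any nonzero polynomial with rational coefficients). -/

import Mathlib

/-- The Bessel function of the first kind `J_ν`, defined for real order `ν`
by its power series (interpreted with real powers `(x/2)^(2k+ν)`). -/
noncomputable def besselJ (ν x : ℝ) : ℝ :=
  ∑' k : ℕ, (-1 : ℝ) ^ k / (k.factorial * Real.Gamma ((k : ℝ) + ν + 1)) *
    (x / 2) ^ (2 * (k : ℝ) + ν)

/-- `Ξ_ℓ^{(d)}(r) = r^{(2-d)/2} J_{ℓ + d/2 - 1}(r)`. -/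
noncomputable def Xi (d ℓ : ℕ) (r : ℝ) : ℝ :=
  r ^ (((2 : ℝ) - d) / 2) * besselJ ((ℓ : ℝ) + (d : ℝ) / 2 - 1) r

open Polynomial

/-- Additive derivations of a commutative ring. -/
abbrev RingDerivation (S : Type*) [CommRing S] := Derivation ℤ S S

/-- An additive map satisfying the Leibniz rule, as a derivation. -/
def RingDerivation.mk {S : Type*} [CommRing S] (f : S →+ S)
    (h : ∀ a b, f (a * b) = a * f b + b * f a) : RingDerivation S :=
  Derivation.mk' f.toIntLinearMap (by simpa using h)

section Twist

variable {S ι : Type*} [CommRing S] [Fintype ι]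

/-- The operator on row vectors dual to the linear system `d Y = A Y`: it satisfies
`d (P ⬝ Y) = (twist d A P) ⬝ Y`. -/
def twist (d : RingDerivation S) (A : Matrix ι ι S) (P : ι → S) : ι → S :=
  fun j => d (P j) + ∑ i, P i * A i j

lemma derivation_dotProduct (d : RingDerivation S) (A : Matrix ι ι S) (P Y : ι → S)
    (hY : ∀ i, d (Y i) = ∑ j, A i j * Y j) :
    d (∑ i, P i * Y i) = ∑ i, twist d A P i * Y i := by
  simp only [twist, map_sum, Derivation.leibniz, smul_eq_mul, hY, add_mul, Finset.sum_add_distrib,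
    Finset.mul_sum, Finset.sum_mul]
  rw [add_comm]
  congr 1
  · exact Finset.sum_congr rfl fun _ _ => mul_comm _ _
  · rw [Finset.sum_comm]
    exact Finset.sum_congr rfl fun _ _ => Finset.sum_congr rfl fun _ _ => by ring

lemma derivation_iterate_dotProduct (d : RingDerivation S) (A : Matrix ι ι S) (P Y : ι → S)
    (hY : ∀ i, d (Y i) = ∑ j, A i j * Y j) (k : ℕ) :
    d^[k] (∑ i, P i * Y i) = ∑ i, (twist d A)^[k] P i * Y i := by
  induction k generalizing P with
  | zero => simp
  | succ k ih =>
    rw [Function.iterate_succ_apply, Function.iterate_succ_apply, derivation_dotProduct d A P Y hY,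
      ih]

lemma twist_add (d : RingDerivation S) (A : Matrix ι ι S) (P Q : ι → S) :
    twist d A (P + Q) = twist d A P + twist d A Q := by
  ext j
  simp only [twist, Pi.add_apply, map_add, add_mul, Finset.sum_add_distrib]
  ring

lemma twist_smul (d : RingDerivation S) (A : Matrix ι ι S) (g : S) (P : ι → S) :
    twist d A (g • P) = d g • P + g • twist d A P := by
  ext j
  simp only [twist, Pi.add_apply, Pi.smul_apply, smul_eq_mul, Derivation.leibniz, mul_add,
    Finset.mul_sum, mul_assoc]
  ring

lemma map_twist {S' : Type*} [CommRing S'] (φ : S →+* S') (d : RingDerivation S)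
    (d' : RingDerivation S') (hφ : ∀ s, φ (d s) = d' (φ s)) (A : Matrix ι ι S) (P : ι → S) :
    φ ∘ twist d A P = twist d' (A.map φ) (φ ∘ P) := by
  ext j
  simp [twist, hφ, map_sum]

lemma map_twist_iterate {S' : Type*} [CommRing S'] (φ : S →+* S') (d : RingDerivation S)
    (d' : RingDerivation S') (hφ : ∀ s, φ (d s) = d' (φ s)) (A : Matrix ι ι S) (P : ι → S)
    (k : ℕ) : φ ∘ (twist d A)^[k] P = (twist d' (A.map φ))^[k] (φ ∘ P) := by
  induction k generalizing P with
  | zero => rfl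
  | succ k ih => rw [Function.iterate_succ_apply, Function.iterate_succ_apply, ih,
      map_twist φ d d' hφ]

end Twist

/-- The Euler operator `X d/dX` on polynomials. -/
noncomputable def eulerPoly (R : Type*) [CommRing R] : RingDerivation R[X] :=
  ((X : R[X]) • (derivative' : Derivation R R[X] R[X])).restrictScalars ℤ

/-- The Euler operator `X d/dX` on power series. -/
noncomputable def eulerPS (R : Type*) [CommRing R] : RingDerivation (PowerSeries R) :=
  RingDerivation.mk
    ((AddMonoidHom.mulLeft PowerSeries.X).comp (PowerSeries.derivative R).toLinearMap.toAddMonoidHom)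
    fun a b => by
      simp
      ring

lemma eulerPoly_apply {R : Type*} [CommRing R] (p : R[X]) :
    eulerPoly R p = X * derivative p := rfl

lemma coeff_eulerPoly {R : Type*} [CommRing R] (p : R[X]) (k : ℕ) :
    (eulerPoly R p).coeff k = k * p.coeff k := by
  rw [eulerPoly_apply]
  cases k with
  | zero => simp
  | succ k => rw [coeff_X_mul, coeff_derivative]; push_cast; ring

lemma coeff_eulerPS {R : Type*} [CommRing R] (p : PowerSeries R) (k : ℕ) :
    PowerSeries.coeff k (eulerPS R p) = k * PowerSeries.coeff k p := by
  have : eulerPS R p = PowerSeries.X * PowerSeries.derivative R p := rfl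
  rw [this]
  cases k with
  | zero => simp
  | succ k => rw [PowerSeries.coeff_succ_X_mul, PowerSeries.coeff_derivative]; push_cast; ring

lemma coeff_eulerPS_iterate {R : Type*} [CommRing R] (p : PowerSeries R) (t k : ℕ) :
    PowerSeries.coeff k ((eulerPS R)^[t] p) = (k : R) ^ t * PowerSeries.coeff k p := by
  induction t with
  | zero => simp
  | succ t ih => rw [Function.iterate_succ_apply', coeff_eulerPS, ih]; ring

lemma map_eulerPoly {R R' : Type*} [CommRing R] [CommRing R'] (φ : R →+* R') (p : R[X]) :
    mapRingHom φ (eulerPoly R p) = eulerPoly R' (mapRingHom φ p) := by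
  ext k
  simp [coeff_eulerPoly]

/-- Integer polynomials as rational power series. -/
noncomputable def intPolyToPS : ℤ[X] →+* PowerSeries ℚ :=
  (coeToPowerSeries.ringHom).comp (mapRingHom (Int.castRingHom ℚ))

lemma coeff_intPolyToPS (p : ℤ[X]) (k : ℕ) :
    PowerSeries.coeff k (intPolyToPS p) = (p.coeff k : ℚ) := by
  simp [intPolyToPS]

lemma intPolyToPS_euler (p : ℤ[X]) :
    intPolyToPS (eulerPoly ℤ p) = eulerPS ℚ (intPolyToPS p) := by
  ext k
  simp [coeff_intPolyToPS, coeff_eulerPoly, coeff_eulerPS]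

lemma natDegree_eulerPoly_le {R : Type*} [CommRing R] (p : R[X]) :
    (eulerPoly R p).natDegree ≤ p.natDegree := by
  rw [natDegree_le_iff_coeff_eq_zero]
  intro k hk
  rw [coeff_eulerPoly, coeff_eq_zero_of_natDegree_lt hk, mul_zero]

lemma natDegree_twist_le {ι : Type*} [Fintype ι] {A : Matrix ι ι ℤ[X]} {P : ι → ℤ[X]} {n a : ℕ}
    (hA : ∀ i j, (A i j).natDegree ≤ a) (hP : ∀ i, (P i).natDegree ≤ n) (j : ι) :
    (twist (eulerPoly ℤ) A P j).natDegree ≤ n + a := by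
  refine (natDegree_add_le _ _).trans (max_le ?_ ?_)
  · exact ((natDegree_eulerPoly_le _).trans (hP j)).trans (Nat.le_add_right _ _)
  · exact natDegree_sum_le_of_forall_le _ _ fun i _ =>
      natDegree_mul_le.trans (add_le_add (hP i) (hA i j))

lemma natDegree_twist_iterate_le {ι : Type*} [Fintype ι] {A : Matrix ι ι ℤ[X]} {P : ι → ℤ[X]}
    {n a : ℕ} (hA : ∀ i j, (A i j).natDegree ≤ a) (hP : ∀ i, (P i).natDegree ≤ n) (k : ℕ)
    (j : ι) : ((twist (eulerPoly ℤ) A)^[k] P j).natDegree ≤ n + a * k := by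
  induction k generalizing P n with
  | zero => simpa using hP j
  | succ k ih =>
    rw [Function.iterate_succ_apply]
    refine (ih (natDegree_twist_le hA hP)).trans (le_of_eq (by ring))

section PointVanishing

variable {K ι : Type*} [Field K] [Fintype ι]

/-- The row vector `Q` vanishes to order `s` at `ρ` against the solution of the linear system
with value `w` at `ρ`. -/
def VanishAt (A : Matrix ι ι K[X]) (ρ : K) (w : ι → K) : ℕ → (ι → K[X]) → Prop
  | 0, _ => True
  | s + 1, Q => ∑ i, (Q i).eval ρ * w i = 0 ∧ VanishAt A ρ w s (twist (eulerPoly K) A Q)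

variable {A : Matrix ι ι K[X]} {ρ : K} {w : ι → K}

lemma VanishAt.add {s : ℕ} {P Q : ι → K[X]} (hP : VanishAt A ρ w s P) (hQ : VanishAt A ρ w s Q) :
    VanishAt A ρ w s (P + Q) := by
  induction s generalizing P Q with
  | zero => trivial
  | succ s ih =>
    refine ⟨?_, ?_⟩
    · simp [add_mul, Finset.sum_add_distrib, hP.1, hQ.1]
    · rw [twist_add]
      exact ih hP.2 hQ.2

lemma VanishAt.of_succ {s : ℕ} {P : ι → K[X]} (hP : VanishAt A ρ w (s + 1) P) :
    VanishAt A ρ w s P := by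
  induction s generalizing P with
  | zero => trivial
  | succ s ih => exact ⟨hP.1, ih hP.2⟩

lemma VanishAt.mono {s t : ℕ} (hst : s ≤ t) {P : ι → K[X]} (hP : VanishAt A ρ w t P) :
    VanishAt A ρ w s P := by
  induction hst with
  | refl => exact hP
  | step _ ih => exact ih hP.of_succ

lemma VanishAt.smul {s : ℕ} (g : K[X]) {P : ι → K[X]} (hP : VanishAt A ρ w s P) :
    VanishAt A ρ w s (g • P) := by
  induction s generalizing P g with
  | zero => trivial
  | succ s ih =>
    refine ⟨?_, ?_⟩
    · simp only [Pi.smul_apply, smul_eq_mul, eval_mul, mul_assoc, ← Finset.mul_sum, hP.1, mul_zero]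
    · rw [twist_smul]
      exact (ih _ hP.of_succ).add (ih _ hP.2)

lemma VanishAt.zero {s : ℕ} : VanishAt A ρ w s 0 := by
  induction s with
  | zero => trivial
  | succ s ih =>
    refine ⟨by simp, ?_⟩
    have : twist (eulerPoly K) A 0 = 0 := by
      funext j
      simp [twist]
    rwa [this]

lemma VanishAt.sum {κ : Type*} {s : ℕ} (T : Finset κ) {P : κ → ι → K[X]}
    (hP : ∀ k ∈ T, VanishAt A ρ w s (P k)) : VanishAt A ρ w s (∑ k ∈ T, P k) := by
  classical
  induction T using Finset.induction_on with
  | empty => simpa using VanishAt.zero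
  | insert a T ha ih =>
    rw [Finset.sum_insert ha]
    exact (hP a (Finset.mem_insert_self _ _)).add
      (ih fun k hk => hP k (Finset.mem_insert_of_mem hk))

lemma VanishAt.pow_smul (s : ℕ) (P : ι → K[X]) : VanishAt A ρ w s (((X - C ρ) ^ s) • P) := by
  induction s generalizing P with
  | zero => trivial
  | succ s ih =>
    refine ⟨by simp, ?_⟩
    rw [twist_smul]
    have h1 : eulerPoly K ((X - C ρ) ^ (s + 1)) • P
        = ((X - C ρ) ^ s) • ((((s : K[X]) + 1) * X) • P) := by
      rw [eulerPoly_apply, derivative_pow, smul_smul]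
      congr 1
      simp
      ring
    have h2 : ((X - C ρ) ^ (s + 1)) • twist (eulerPoly K) A P
        = ((X - C ρ) ^ s) • ((X - C ρ) • twist (eulerPoly K) A P) := by
      rw [smul_smul, pow_succ]
    rw [h1, h2]
    exact (ih _).add (ih _)

lemma VanishAt.iterate {s k : ℕ} {P : ι → K[X]} (hP : VanishAt A ρ w (s + k) P) :
    VanishAt A ρ w s ((twist (eulerPoly K) A)^[k] P) := by
  induction k generalizing P with
  | zero => exact hP
  | succ k ih =>
    rw [Function.iterate_succ_apply]
    exact ih hP.2

lemma vanishAt_of_iterate {s : ℕ} {P : ι → K[X]}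
    (hP : ∀ k < s, ∑ i, ((twist (eulerPoly K) A)^[k] P i).eval ρ * w i = 0) :
    VanishAt A ρ w s P := by
  induction s generalizing P with
  | zero => trivial
  | succ s ih =>
    refine ⟨by simpa using hP 0 (Nat.succ_pos _), ih fun k hk => ?_⟩
    have := hP (k + 1) (Nat.succ_lt_succ hk)
    rwa [Function.iterate_succ_apply] at this

lemma pow_dvd_of_vanishAt [CharZero K] (hρ : ρ ≠ 0) {s : ℕ} {g : K[X]} {e : ι → K[X]}
    (he : ∑ i, (e i).eval ρ * w i ≠ 0) (h : VanishAt A ρ w s (g • e)) : (X - C ρ) ^ s ∣ g := by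
  induction s generalizing g with
  | zero => simp
  | succ s ih =>
    have hg : g.eval ρ = 0 := by
      have := h.1
      simp only [Pi.smul_apply, smul_eq_mul, eval_mul, mul_assoc, ← Finset.mul_sum] at this
      exact (mul_eq_zero.mp this).resolve_right he
    obtain ⟨u, hu⟩ := ih h.of_succ
    have h2 := h.2
    rw [twist_smul] at h2
    have h3 : VanishAt A ρ w s ((-1 : K[X]) • (g • twist (eulerPoly K) A e)) := by
      refine VanishAt.smul _ ?_
      rw [hu, mul_smul]
      exact VanishAt.pow_smul _ _
    have h4 : VanishAt A ρ w s (eulerPoly K g • e) := by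
      have := h2.add h3
      simpa using this
    have h5 := ih h4
    by_cases hg0 : g = 0
    · simp [hg0]
    have hcop : IsCoprime ((X - C ρ) ^ s) (X : K[X]) := by
      refine IsCoprime.pow_left ?_
      have := isCoprime_X_sub_C_of_isUnit_sub (R := K) (a := ρ) (b := 0) (by simpa using hρ)
      simpa using this
    rw [eulerPoly_apply] at h5
    have h6 := hcop.dvd_of_dvd_mul_left h5
    have hroot : g.IsRoot ρ := hg
    rw [← le_rootMultiplicity_iff hg0]
    have hpos : 0 < g.rootMultiplicity ρ := (rootMultiplicity_pos hg0).mpr hroot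
    have hd := derivative_rootMultiplicity_of_root hroot
    have hder : derivative g ≠ 0 := by
      intro h0
      obtain ⟨x, hx⟩ := natDegree_eq_zero.mp (derivative_eq_zero.mp h0)
      rw [← hx] at hg hg0
      simp at hg
      simp [hg] at hg0
    rw [← le_rootMultiplicity_iff hder] at h6
    omega

end PointVanishing

section ZeroEstimate

open Matrix

lemma natDegree_det_le' {ι : Type*} [Fintype ι] [DecidableEq ι] (M : Matrix ι ι ℤ[X]) (b : ℕ)
    (hM : ∀ i j, (M i j).natDegree ≤ b) : M.det.natDegree ≤ Fintype.card ι * b := by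
  rw [det_apply]
  refine natDegree_sum_le_of_forall_le _ _ fun σ _ => ?_
  have h1 : (∏ i, M (σ i) i).natDegree ≤ Fintype.card ι * b := by
    refine (natDegree_prod_le _ _).trans ?_
    refine (Finset.sum_le_sum fun i _ => hM (σ i) i).trans ?_
    simp
  rcases Int.units_eq_one_or (Equiv.Perm.sign σ) with h | h <;> simpa [h] using h1

lemma X_pow_dvd_of_mul {T o : ℕ} {f g : PowerSeries ℚ} (h : PowerSeries.X ^ T ∣ f * g)
    (hg : PowerSeries.coeff o g ≠ 0) : PowerSeries.X ^ (T - o) ∣ f := by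
  have hg0 : g ≠ 0 := fun h0 => hg (by simp [h0])
  by_cases hf0 : f = 0
  · simp [hf0]
  have h1 : (T : ℕ∞) ≤ (f * g).order := by
    rw [PowerSeries.X_pow_dvd_iff] at h
    exact PowerSeries.le_order _ _ fun i hi => h i (by exact_mod_cast hi)
  rw [PowerSeries.order_mul] at h1
  have h2 : g.order ≤ o := PowerSeries.order_le _ hg
  rw [PowerSeries.X_pow_dvd_iff]
  intro m hm
  apply PowerSeries.coeff_of_lt_order
  by_contra hlt
  have h3 : f.order ≤ m := not_lt.mp hlt
  have : (T : ℕ∞) ≤ (m : ℕ∞) + o := h1.trans (add_le_add h3 h2)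
  have : T ≤ m + o := by exact_mod_cast this
  omega

lemma X_pow_dvd_eulerPS_iterate {T : ℕ} {f : PowerSeries ℚ} (h : PowerSeries.X ^ T ∣ f) (k : ℕ) :
    PowerSeries.X ^ T ∣ (eulerPS ℚ)^[k] f := by
  rw [PowerSeries.X_pow_dvd_iff] at h ⊢
  intro m hm
  rw [coeff_eulerPS_iterate, h m hm, mul_zero]

/-- Reduction of integer polynomials to polynomials over `K`. -/
noncomputable abbrev intPolyTo (K : Type*) [CommRing K] : ℤ[X] →+* K[X] :=
  mapRingHom (Int.castRingHom K)

theorem zero_estimate {ι : Type*} [Fintype ι] [DecidableEq ι] {A : Matrix ι ι ℤ[X]}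
    {P : ι → ℤ[X]} {Y : ι → PowerSeries ℚ} {K : Type*} [Field K] [CharZero K] {ρ : K} (hρ : ρ ≠ 0)
    {w : ι → K} {n a c o T t : ℕ} (hA : ∀ i j, (A i j).natDegree ≤ a)
    (hP : ∀ i, (P i).natDegree ≤ n) (κ : ι → ℕ) (hκ : ∀ i, κ i ≤ c)
    (hdet : (Matrix.of fun i j => (twist (eulerPoly ℤ) A)^[κ i] P j).det ≠ 0)
    (hY : ∀ i, eulerPS ℚ (Y i) = ∑ j, intPolyToPS (A i j) * Y j)
    {j₀ : ι} (hj₀ : PowerSeries.coeff o (Y j₀) ≠ 0)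
    (hT : PowerSeries.X ^ T ∣ ∑ i, intPolyToPS (P i) * Y i)
    {j₁ : ι} (hw : w j₁ ≠ 0)
    (ht : ∀ k < t, ∑ i, aeval ρ ((twist (eulerPoly ℤ) A)^[k] P i) * w i = 0) :
    T + t ≤ Fintype.card ι * (n + a * c) + o + c := by
  set M : Matrix ι ι ℤ[X] := Matrix.of fun i j => (twist (eulerPoly ℤ) A)^[κ i] P j with hM
  have hdeg : M.det.natDegree ≤ Fintype.card ι * (n + a * c) :=
    natDegree_det_le' M _ fun i j => (natDegree_twist_iterate_le hA hP (κ i) j).trans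
      (Nat.add_le_add_left (Nat.mul_le_mul_left a (hκ i)) n)
  have hadj : ∀ j j', ∑ i, M.adjugate j i * M i j' = if j = j' then M.det else 0 := by
    intro j j'
    have := congrFun (congrFun (adjugate_mul M) j) j'
    rw [Matrix.mul_apply] at this
    rw [this]
    simp [Matrix.one_apply]
  -- vanishing at the origin
  have hzero : X ^ (T - o) ∣ intPolyTo K M.det := by
    have h1 : intPolyToPS M.det * Y j₀
        = ∑ i, intPolyToPS (M.adjugate j₀ i) * ∑ j, intPolyToPS (M i j) * Y j := by
      simp only [Finset.mul_sum]
      rw [Finset.sum_comm]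
      have : ∀ j, ∑ i, intPolyToPS (M.adjugate j₀ i) * (intPolyToPS (M i j) * Y j)
          = intPolyToPS (if j₀ = j then M.det else 0) * Y j := by
        intro j
        rw [← hadj, map_sum, Finset.sum_mul]
        exact Finset.sum_congr rfl fun i _ => by rw [map_mul, mul_assoc]
      simp only [this]
      rw [Finset.sum_eq_single j₀]
      · simp
      · intro b _ hb
        simp [Ne.symm hb]
      · simp
    have h2 : PowerSeries.X ^ T ∣ intPolyToPS M.det * Y j₀ := by
      rw [h1]
      refine Finset.dvd_sum fun i _ => Dvd.dvd.mul_left ?_ _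
      have h3 := derivation_iterate_dotProduct (eulerPS ℚ) (A.map intPolyToPS)
        (intPolyToPS ∘ P) Y hY (κ i)
      rw [← map_twist_iterate intPolyToPS (eulerPoly ℤ) (eulerPS ℚ) intPolyToPS_euler] at h3
      have h4 := X_pow_dvd_eulerPS_iterate hT (κ i)
      simp only [Function.comp_apply] at h3
      rw [h3] at h4
      exact h4
    have h5 := X_pow_dvd_of_mul h2 hj₀
    rw [PowerSeries.X_pow_dvd_iff] at h5
    rw [X_pow_dvd_iff]
    intro d hd
    have := h5 d hd
    rw [coeff_intPolyToPS] at this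
    have : M.det.coeff d = 0 := by exact_mod_cast this
    simp [this]
  -- vanishing at `ρ`
  have hpoint : (X - C ρ) ^ (t - c) ∣ intPolyTo K M.det := by
    refine pow_dvd_of_vanishAt (A := A.map (intPolyTo K)) (w := w) (e := Pi.single j₁ 1) hρ ?_ ?_
    · rw [Finset.sum_eq_single j₁]
      · simpa using hw
      · intro b _ hb
        simp [Pi.single_eq_of_ne hb]
      · simp
    · have h1 : intPolyTo K M.det • (Pi.single j₁ 1 : ι → K[X])
          = ∑ i, intPolyTo K (M.adjugate j₁ i) • (intPolyTo K ∘ M i) := by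
        funext j
        rw [Finset.sum_apply]
        simp only [Pi.smul_apply, smul_eq_mul, Function.comp_apply, ← map_mul]
        rw [← map_sum, hadj]
        by_cases h : j₁ = j
        · subst h
          simp
        · simp [h]
      rw [h1]
      refine VanishAt.sum _ fun i _ => VanishAt.smul _ ?_
      have h2 : intPolyTo K ∘ M i
          = (twist (eulerPoly K) (A.map (intPolyTo K)))^[κ i] (intPolyTo K ∘ P) := by
        rw [← map_twist_iterate (intPolyTo K) (eulerPoly ℤ) (eulerPoly K) (map_eulerPoly _)]
        rfl
      rw [h2]
      rcases le_or_gt c t with hct | hct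
      · refine VanishAt.iterate (VanishAt.mono (t := t) ?_ (vanishAt_of_iterate fun k hk => ?_))
        · have := hκ i
          omega
        · rw [← map_twist_iterate (intPolyTo K) (eulerPoly ℤ) (eulerPoly K) (map_eulerPoly _)]
          rw [← ht k hk]
          refine Finset.sum_congr rfl fun i _ => ?_
          simp [aeval_def, eval_map]
      · have : t - c = 0 := by omega
        rw [this]
        trivial
  have hinj : Function.Injective (intPolyTo K) :=
    map_injective _ (RingHom.injective_int _)
  have hcop : IsCoprime ((X : K[X]) ^ (T - o)) ((X - C ρ) ^ (t - c)) := by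
    refine IsCoprime.pow ?_
    have := isCoprime_X_sub_C_of_isUnit_sub (R := K) (a := 0) (b := ρ) (by simpa using hρ)
    simpa using this
  have hdvd := hcop.mul_dvd hzero hpoint
  have hne : intPolyTo K M.det ≠ 0 := fun h => hdet (hinj (by rw [h, map_zero]))
  have h1 := natDegree_le_of_dvd hdvd hne
  have h2 : (intPolyTo K M.det).natDegree ≤ M.det.natDegree := natDegree_map_le
  rw [natDegree_mul (pow_ne_zero _ X_ne_zero) (pow_ne_zero _ (X_sub_C_ne_zero _)),
    natDegree_pow, natDegree_pow, natDegree_X, natDegree_X_sub_C] at h1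
  omega

end ZeroEstimate

section Evaluation

/-- A power series with rational coefficients of the shape `a k / (C ^ k * k!)`, where the integers
`a k` grow at most geometrically. -/
def IsEType (C B : ℕ) (f : PowerSeries ℚ) : Prop :=
  ∀ k, ∃ a : ℤ, |a| ≤ (B : ℤ) ^ (k + 1) ∧
    PowerSeries.coeff k f = (a : ℚ) / ((C : ℚ) ^ k * (k.factorial : ℚ))

/-- The value at a complex number of a power series with rational coefficients. -/
noncomputable def psEval (x : ℂ) (f : PowerSeries ℚ) : ℂ :=
  ∑' k, ((PowerSeries.coeff k f : ℚ) : ℂ) * x ^ k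

/-- Absolute convergence of a power series with rational coefficients at a complex number. -/
def PSSummable (x : ℂ) (f : PowerSeries ℚ) : Prop :=
  Summable fun k => ‖((PowerSeries.coeff k f : ℚ) : ℂ) * x ^ k‖

lemma IsEType.norm_coeff_le {C B : ℕ} (hC : 0 < C) {f : PowerSeries ℚ} (hf : IsEType C B f)
    (k : ℕ) : ‖((PowerSeries.coeff k f : ℚ) : ℂ)‖ ≤ (B : ℝ) ^ (k + 1) / k.factorial := by
  obtain ⟨a, ha, hk⟩ := hf k
  rw [hk]
  push_cast
  rw [norm_div, norm_mul, norm_pow, Complex.norm_natCast, Complex.norm_natCast,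
    Complex.norm_intCast]
  have h1 : |(a : ℝ)| ≤ (B : ℝ) ^ (k + 1) := by exact_mod_cast ha
  have h2 : (1 : ℝ) ≤ (C : ℝ) ^ k := one_le_pow₀ (by exact_mod_cast hC)
  have h3 : (0 : ℝ) < k.factorial := by positivity
  gcongr
  nlinarith

lemma IsEType.summable {C B : ℕ} (hC : 0 < C) {f : PowerSeries ℚ} (hf : IsEType C B f) (x : ℂ) :
    PSSummable x f := by
  refine Summable.of_nonneg_of_le (fun _ => norm_nonneg _) (fun k => ?_)
    ((Real.summable_pow_div_factorial (B * ‖x‖)).mul_left (B : ℝ))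
  rw [norm_mul, norm_pow]
  calc _ ≤ (B : ℝ) ^ (k + 1) / k.factorial * ‖x‖ ^ k := by
        gcongr
        exact hf.norm_coeff_le hC k
    _ = _ := by rw [mul_pow]; ring

lemma coeff_mul_pow_eq (x : ℂ) (f g : PowerSeries ℚ) (k : ℕ) :
    ((PowerSeries.coeff k (f * g) : ℚ) : ℂ) * x ^ k = ∑ p ∈ Finset.HasAntidiagonal.antidiagonal k,
      (((PowerSeries.coeff p.1 f : ℚ) : ℂ) * x ^ p.1) *
        (((PowerSeries.coeff p.2 g : ℚ) : ℂ) * x ^ p.2) := by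
  rw [PowerSeries.coeff_mul]
  push_cast
  rw [Finset.sum_mul]
  refine Finset.sum_congr rfl fun p hp => ?_
  rw [← Finset.HasAntidiagonal.mem_antidiagonal.mp hp, pow_add]
  ring

lemma psEval_mul {x : ℂ} {f g : PowerSeries ℚ} (hf : PSSummable x f) (hg : PSSummable x g) :
    psEval x (f * g) = psEval x f * psEval x g := by
  unfold psEval
  rw [tsum_mul_tsum_eq_tsum_sum_antidiagonal_of_summable_norm hf hg]
  exact tsum_congr fun k => coeff_mul_pow_eq x f g k

lemma PSSummable.mul {x : ℂ} {f g : PowerSeries ℚ} (hf : PSSummable x f) (hg : PSSummable x g) :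
    PSSummable x (f * g) := by
  have := summable_norm_sum_mul_antidiagonal_of_summable_norm hf hg
  unfold PSSummable
  simpa only [coeff_mul_pow_eq] using this

lemma PSSummable.add {x : ℂ} {f g : PowerSeries ℚ} (hf : PSSummable x f) (hg : PSSummable x g) :
    PSSummable x (f + g) := by
  refine Summable.of_nonneg_of_le (fun _ => norm_nonneg _) (fun k => ?_) (Summable.add hf hg)
  rw [map_add]
  push_cast
  rw [add_mul]
  exact norm_add_le _ _

lemma psEval_add {x : ℂ} {f g : PowerSeries ℚ} (hf : PSSummable x f) (hg : PSSummable x g) :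
    psEval x (f + g) = psEval x f + psEval x g := by
  unfold psEval
  rw [← Summable.tsum_add hf.of_norm hg.of_norm]
  refine tsum_congr fun k => ?_
  rw [map_add]
  push_cast
  ring

lemma psSummable_intPoly (x : ℂ) (p : ℤ[X]) : PSSummable x (intPolyToPS p) := by
  refine summable_of_ne_finset_zero (s := Finset.range (p.natDegree + 1)) fun k hk => ?_
  rw [coeff_intPolyToPS, coeff_eq_zero_of_natDegree_lt (by simpa using hk)]
  simp

lemma psEval_intPoly (x : ℂ) (p : ℤ[X]) : psEval x (intPolyToPS p) = aeval x p := by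
  unfold psEval
  rw [tsum_eq_sum (s := Finset.range (p.natDegree + 1)) (fun k hk => ?_), aeval_eq_sum_range]
  · refine Finset.sum_congr rfl fun k _ => ?_
    rw [coeff_intPolyToPS]
    simp
  · rw [coeff_intPolyToPS, coeff_eq_zero_of_natDegree_lt (by simpa using hk)]
    simp

lemma psEval_sum_aux {ι : Type*} {x : ℂ} (s : Finset ι) {f : ι → PowerSeries ℚ}
    (hf : ∀ i, PSSummable x (f i)) :
    PSSummable x (∑ i ∈ s, f i) ∧ psEval x (∑ i ∈ s, f i) = ∑ i ∈ s, psEval x (f i) := by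
  classical
  induction s using Finset.induction_on with
  | empty => simp [PSSummable, psEval, summable_zero]
  | insert a s ha ih =>
    rw [Finset.sum_insert ha, Finset.sum_insert ha]
    exact ⟨(hf a).add ih.1, by rw [psEval_add (hf a) ih.1, ih.2]⟩

lemma psEval_dotProduct {ι : Type*} [Fintype ι] {x : ℂ} {Y : ι → PowerSeries ℚ}
    (hY : ∀ i, PSSummable x (Y i)) (P : ι → ℤ[X]) :
    psEval x (∑ i, intPolyToPS (P i) * Y i) = ∑ i, aeval x (P i) * psEval x (Y i) := by
  rw [(psEval_sum_aux _ fun i => (psSummable_intPoly x (P i)).mul (hY i)).2]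
  exact Finset.sum_congr rfl fun i _ => by
    rw [psEval_mul (psSummable_intPoly x (P i)) (hY i), psEval_intPoly]

lemma pow_add_le_mul_exp {T t : ℕ} (hT : 0 < T) (ht : t ≤ T) (l : ℕ) :
    ((T + l : ℕ) : ℝ) ^ t ≤ (T : ℝ) ^ t * Real.exp l := by
  have hT' : (0 : ℝ) < T := by exact_mod_cast hT
  have h1 : ((T + l : ℕ) : ℝ) = T * (l / T + 1) := by
    push_cast
    field_simp
    ring
  rw [h1, mul_pow]
  gcongr
  calc ((l : ℝ) / T + 1) ^ t ≤ ((l : ℝ) / T + 1) ^ T :=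
        pow_le_pow_right₀ (by linarith [div_nonneg (Nat.cast_nonneg (α := ℝ) l) hT'.le]) ht
    _ ≤ (Real.exp (l / T)) ^ T := by
        gcongr
        exact Real.add_one_le_exp _
    _ = Real.exp l := by
        rw [← Real.exp_nat_mul]
        congr 1
        field_simp

/-- Smallness of the values of the Euler derivatives of a power series vanishing to high order. -/
lemma norm_psEval_euler_le {R : PowerSeries ℚ} {T t n : ℕ} {Q b ϱ : ℝ} {x : ℂ} (hT : 0 < T)
    (ht : t ≤ T) (hn : n ≤ T) (hQ : 0 ≤ Q) (hb : 0 ≤ b) (hx : ‖x‖ ≤ ϱ)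
    (hR : PowerSeries.X ^ T ∣ R)
    (hcoeff : ∀ s, n ≤ s → ‖((PowerSeries.coeff s R : ℚ) : ℂ)‖ ≤ Q * b ^ s / (s - n).factorial) :
    ‖psEval x ((eulerPS ℚ)^[t] R)‖ ≤
      Q * (T : ℝ) ^ t * (b * ϱ) ^ T / (T - n).factorial * Real.exp (Real.exp 1 * (b * ϱ)) := by
  have hϱ : 0 ≤ ϱ := (norm_nonneg x).trans hx
  have hexp := NormedSpace.expSeries_div_hasSum_exp (Real.exp 1 * (b * ϱ))
  rw [← Real.exp_eq_exp_ℝ] at hexp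
  set F : ℝ := Q * (T : ℝ) ^ t * (b * ϱ) ^ T / (T - n).factorial with hF
  have hterm : ∀ l : ℕ, ‖((PowerSeries.coeff (l + T) ((eulerPS ℚ)^[t] R) : ℚ) : ℂ) * x ^ (l + T)‖
      ≤ F * ((Real.exp 1 * (b * ϱ)) ^ l / l.factorial) := by
    intro l
    rw [coeff_eulerPS_iterate]
    push_cast
    rw [norm_mul, norm_mul, norm_pow, norm_pow]
    have h1 : ‖((l : ℂ) + (T : ℂ))‖ ^ t ≤ (T : ℝ) ^ t * Real.exp l := by
      have := pow_add_le_mul_exp hT ht l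
      have h2 : ‖((l : ℂ) + (T : ℂ))‖ = ((T + l : ℕ) : ℝ) := by
        rw [← Nat.cast_add, Complex.norm_natCast, add_comm]
      rwa [h2]
    have h2 := hcoeff (l + T) (by omega)
    have h3 : ((T - n).factorial * l.factorial : ℝ) ≤ (l + T - n).factorial := by
      have : (T - n).factorial * l.factorial ≤ (l + T - n).factorial := by
        have h := Nat.factorial_mul_factorial_dvd_factorial_add (T - n) l
        have h' : T - n + l = l + T - n := by omega
        rw [h'] at h
        exact Nat.le_of_dvd (Nat.factorial_pos _) h
      exact_mod_cast this
    calc _ ≤ ((T : ℝ) ^ t * Real.exp l) * (Q * b ^ (l + T) / (l + T - n).factorial)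
          * ϱ ^ (l + T) := by gcongr
      _ ≤ ((T : ℝ) ^ t * Real.exp l) * (Q * b ^ (l + T) / ((T - n).factorial * l.factorial))
          * ϱ ^ (l + T) := by gcongr
      _ = _ := by
        rw [hF, mul_pow (Real.exp 1), ← Real.exp_nat_mul, mul_one, mul_pow, mul_pow, pow_add,
          pow_add]
        field_simp
  have hsum := (hexp.mul_left F)
  have hzero : ∀ s < T, ((PowerSeries.coeff s ((eulerPS ℚ)^[t] R) : ℚ) : ℂ) * x ^ s = 0 := by
    intro s hs
    rw [coeff_eulerPS_iterate, (PowerSeries.X_pow_dvd_iff.mp hR) s hs]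
    simp
  have hshift : Summable fun l =>
      ((PowerSeries.coeff (l + T) ((eulerPS ℚ)^[t] R) : ℚ) : ℂ) * x ^ (l + T) :=
    Summable.of_norm_bounded hsum.summable hterm
  have hall := (summable_nat_add_iff T (f := fun l =>
      ((PowerSeries.coeff l ((eulerPS ℚ)^[t] R) : ℚ) : ℂ) * x ^ l)).mp hshift
  unfold psEval
  rw [← hall.sum_add_tsum_nat_add T, Finset.sum_eq_zero fun s hs => hzero s (by simpa using hs),
    zero_add]
  exact tsum_of_norm_bounded hsum hterm

end Evaluation

section AuxiliaryForm

/-- Siegel's lemma with an integral exponent. -/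
lemma exists_int_vec_abs_le {α β : Type*} [Fintype α] [Fintype β] (A : Matrix α β ℤ)
    (hlt : Fintype.card α < Fintype.card β) (h0 : 0 < Fintype.card α) {N q : ℕ} (hN : 1 ≤ N)
    (hA : ∀ i j, |A i j| ≤ (N : ℤ))
    (hq : Fintype.card α ≤ q * (Fintype.card β - Fintype.card α)) :
    ∃ t : β → ℤ, t ≠ 0 ∧ A.mulVec t = 0 ∧ ∀ j, |t j| ≤ (((Fintype.card β * N) ^ q : ℕ) : ℤ) := by
  let _ : SeminormedAddCommGroup (Matrix α β ℤ) := Matrix.seminormedAddCommGroup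
  obtain ⟨t, ht0, ht, hle⟩ := Int.Matrix.exists_ne_zero_int_vec_norm_le A hlt h0
  refine ⟨t, ht0, ht, fun j => ?_⟩
  have hN' : (1 : ℝ) ≤ N := by exact_mod_cast hN
  have hnorm : max 1 ‖A‖ ≤ N := by
    refine max_le hN' ((Matrix.norm_le_iff (by positivity)).mpr fun i j => ?_)
    rw [Int.norm_eq_abs]
    exact_mod_cast hA i j
  have hβ : (1 : ℝ) ≤ Fintype.card β := by exact_mod_cast (by omega : 1 ≤ Fintype.card β)
  have hsub : (0 : ℝ) < (Fintype.card β : ℝ) - Fintype.card α := by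
    rw [sub_pos]
    exact_mod_cast hlt
  have hexp : (Fintype.card α : ℝ) / ((Fintype.card β : ℝ) - Fintype.card α) ≤ (q : ℝ) := by
    rw [div_le_iff₀ hsub, ← Nat.cast_sub hlt.le]
    exact_mod_cast hq
  have h1 : ‖t j‖ ≤ ((Fintype.card β : ℝ) * N) ^ q := by
    refine ((norm_le_pi_norm t j).trans hle).trans ?_
    rw [← Real.rpow_natCast]
    calc _ ≤ ((Fintype.card β : ℝ) * N) ^
          ((Fintype.card α : ℝ) / ((Fintype.card β : ℝ) - Fintype.card α)) := by
          refine Real.rpow_le_rpow (by positivity) (by gcongr) (by positivity)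
      _ ≤ _ := Real.rpow_le_rpow_of_exponent_le (by nlinarith) hexp
  rw [Int.norm_eq_abs] at h1
  exact_mod_cast h1

/-- The vector of integer polynomials with prescribed coefficients. -/
noncomputable def polyOfCoeffs {ι : Type*} {n : ℕ} (t : ι × Fin (n + 1) → ℤ) (i : ι) : ℤ[X] :=
  ∑ j : Fin (n + 1), C (t (i, j)) * X ^ (j : ℕ)

lemma coeff_polyOfCoeffs {ι : Type*} {n : ℕ} (t : ι × Fin (n + 1) → ℤ) (i : ι) (k : ℕ) :
    (polyOfCoeffs t i).coeff k = if h : k < n + 1 then t (i, ⟨k, h⟩) else 0 := by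
  unfold polyOfCoeffs
  simp only [finsetSum_coeff, coeff_C_mul_X_pow]
  split_ifs with h
  · rw [Finset.sum_eq_single ⟨k, h⟩]
    · simp
    · intro b _ hb
      rw [if_neg]
      rintro rfl
      exact hb rfl
    · simp
  · refine Finset.sum_eq_zero fun j _ => if_neg ?_
    rintro rfl
    exact h j.2

lemma natDegree_polyOfCoeffs {ι : Type*} {n : ℕ} (t : ι × Fin (n + 1) → ℤ) (i : ι) :
    (polyOfCoeffs t i).natDegree ≤ n := by
  rw [natDegree_le_iff_coeff_eq_zero]
  intro k hk
  rw [coeff_polyOfCoeffs, dif_neg (by omega)]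

lemma coeff_sum_polyOfCoeffs {ι : Type*} [Fintype ι] {n : ℕ} (t : ι × Fin (n + 1) → ℤ)
    (Y : ι → PowerSeries ℚ) (s : ℕ) :
    PowerSeries.coeff s (∑ i, intPolyToPS (polyOfCoeffs t i) * Y i) =
      ∑ p : ι × Fin (n + 1), (t p : ℚ) *
        (if (p.2 : ℕ) ≤ s then PowerSeries.coeff (s - p.2) (Y p.1) else 0) := by
  rw [map_sum, Fintype.sum_prod_type]
  refine Finset.sum_congr rfl fun i _ => ?_
  have h : intPolyToPS (polyOfCoeffs t i) =
      ∑ j : Fin (n + 1), PowerSeries.C (t (i, j) : ℚ) * PowerSeries.X ^ (j : ℕ) := by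
    simp only [intPolyToPS, polyOfCoeffs, map_sum, map_mul, map_pow]
    refine Finset.sum_congr rfl fun j _ => ?_
    simp
  rw [h, Finset.sum_mul, map_sum]
  refine Finset.sum_congr rfl fun j _ => ?_
  rw [mul_assoc, PowerSeries.coeff_C_mul, PowerSeries.coeff_X_pow_mul']

/-- Existence of an auxiliary linear form with small coefficients vanishing to high order at the
origin. -/
lemma exists_auxiliary_form {ι : Type*} [Fintype ι] {Y : ι → PowerSeries ℚ} {D B : ℕ}
    (hD : 0 < D) (hB : 0 < B) (hY : ∀ i, IsEType D B (Y i)) {n T q : ℕ} (hT : 0 < T)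
    (hlt : T < Fintype.card ι * (n + 1)) (hq : T ≤ q * (Fintype.card ι * (n + 1) - T)) :
    ∃ (P : ι → ℤ[X]) (H : ℕ), H = (Fintype.card ι * (n + 1) * (D ^ n * T ^ n * B ^ T)) ^ q ∧
      P ≠ 0 ∧ (∀ i, (P i).natDegree ≤ n) ∧ (∀ i k, |(P i).coeff k| ≤ (H : ℤ)) ∧
      PowerSeries.X ^ T ∣ ∑ i, intPolyToPS (P i) * Y i ∧
      ∀ s, n ≤ s →
        ‖((PowerSeries.coeff s (∑ i, intPolyToPS (P i) * Y i) : ℚ) : ℂ)‖ ≤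
          (Fintype.card ι * (n + 1) * H * B) * (B : ℝ) ^ s / (s - n).factorial := by
  choose a ha ha' using hY
  have hB' : (1 : ℤ) ≤ B := by exact_mod_cast hB
  have hD' : (1 : ℤ) ≤ D := by exact_mod_cast hD
  have hT' : (1 : ℤ) ≤ T := by exact_mod_cast hT
  set Mx : Matrix (Fin T) (ι × Fin (n + 1)) ℤ := fun s p =>
    (D : ℤ) ^ (p.2 : ℕ) * (((s : ℕ).descFactorial p.2 : ℕ) : ℤ) * a p.1 ((s : ℕ) - p.2) with hMx
  have hcard : Fintype.card (ι × Fin (n + 1)) = Fintype.card ι * (n + 1) := by simp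
  obtain ⟨t, ht0, ht, htle⟩ := exists_int_vec_abs_le Mx (N := D ^ n * T ^ n * B ^ T) (q := q)
    (by simpa using hlt) (by simpa using hT) (Nat.one_le_iff_ne_zero.mpr (by positivity))
    (fun s p => by
      have hp : (p.2 : ℕ) ≤ n := by omega
      simp only [hMx]
      rw [abs_mul, abs_mul, abs_pow, Nat.abs_cast, Nat.abs_cast]
      push_cast
      have h1 : (((s : ℕ).descFactorial p.2 : ℕ) : ℤ) ≤ (T : ℤ) ^ n := by
        calc (((s : ℕ).descFactorial p.2 : ℕ) : ℤ) ≤ (s : ℤ) ^ (p.2 : ℕ) := by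
              exact_mod_cast Nat.descFactorial_le_pow _ _
          _ ≤ (T : ℤ) ^ (p.2 : ℕ) := by
              gcongr
              exact_mod_cast s.2.le
          _ ≤ _ := pow_le_pow_right₀ hT' hp
      have h2 : |a p.1 ((s : ℕ) - p.2)| ≤ (B : ℤ) ^ T :=
        (ha _ _).trans (pow_le_pow_right₀ hB' (by omega))
      have h3 : (D : ℤ) ^ (p.2 : ℕ) ≤ (D : ℤ) ^ n := pow_le_pow_right₀ hD' hp
      gcongr)
    (by simpa using hq)
  rw [hcard] at htle
  refine ⟨polyOfCoeffs t, _, rfl, ?_, natDegree_polyOfCoeffs t, fun i k => ?_, ?_, fun s hs => ?_⟩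
  · intro h
    refine ht0 (funext fun p => ?_)
    have := congr_arg (fun f : ℤ[X] => f.coeff p.2) (congr_fun h p.1)
    simpa [coeff_polyOfCoeffs, Nat.lt_succ_iff.mp p.2.2] using this
  · rw [coeff_polyOfCoeffs]
    split_ifs with h
    · exact htle _
    · simp only [abs_zero]
      positivity
  · rw [PowerSeries.X_pow_dvd_iff]
    intro s hs
    have h1 := congr_fun ht ⟨s, hs⟩
    simp only [Matrix.mulVec, dotProduct, hMx, Pi.zero_apply] at h1
    have h2 : (D : ℚ) ^ s * s.factorial *
        PowerSeries.coeff s (∑ i, intPolyToPS (polyOfCoeffs t i) * Y i) = 0 := by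
      refine Eq.trans ?_ ((congrArg (Int.cast : ℤ → ℚ) h1).trans Int.cast_zero)
      rw [coeff_sum_polyOfCoeffs, Finset.mul_sum, Int.cast_sum]
      refine Finset.sum_congr rfl fun p _ => ?_
      split_ifs with hle
      · rw [ha', ← Nat.factorial_mul_descFactorial hle]
        have hd : (D : ℚ) ^ s = (D : ℚ) ^ (s - p.2) * (D : ℚ) ^ (p.2 : ℕ) := by
          rw [← pow_add, Nat.sub_add_cancel hle]
        have hD0 : (D : ℚ) ≠ 0 := by exact_mod_cast hD.ne'
        have hf : ((s - p.2).factorial : ℚ) ≠ 0 := by exact_mod_cast Nat.factorial_ne_zero _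
        rw [hd]
        push_cast
        field_simp
      · rw [Nat.descFactorial_of_lt (by omega)]
        simp
    refine (mul_eq_zero.mp h2).resolve_left ?_
    have hD0 : (D : ℚ) ≠ 0 := by exact_mod_cast hD.ne'
    positivity
  · rw [coeff_sum_polyOfCoeffs]
    push_cast
    refine (norm_sum_le _ _).trans ?_
    set H : ℝ := ((((Fintype.card ι * (n + 1) * (D ^ n * T ^ n * B ^ T)) ^ q : ℕ) : ℝ)) with hH
    have hbound : ∀ p : ι × Fin (n + 1), ‖(t p : ℂ) * (((if (p.2 : ℕ) ≤ s then
        PowerSeries.coeff (s - p.2) (Y p.1) else 0 : ℚ)) : ℂ)‖ ≤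
          H * B * (B : ℝ) ^ s / (s - n).factorial := by
      intro p
      have hp : (p.2 : ℕ) ≤ n := by omega
      rw [if_pos (hp.trans hs), norm_mul, Complex.norm_intCast]
      have h1 : |(t p : ℝ)| ≤ H := by
        rw [hH]
        exact_mod_cast htle p
      have h2 := IsEType.norm_coeff_le hD (fun k => ⟨_, ha p.1 k, ha' p.1 k⟩) (s - p.2)
      calc _ ≤ H * ((B : ℝ) ^ (s - p.2 + 1) / (s - p.2).factorial) := by gcongr
        _ ≤ H * ((B : ℝ) ^ (s + 1) / (s - n).factorial) := by
          gcongr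
          · exact_mod_cast hB
          · omega
        _ = _ := by ring
    refine (Finset.sum_le_card_nsmul _ _ _ fun p _ => hbound p).trans (le_of_eq ?_)
    rw [Finset.card_univ, hcard, nsmul_eq_mul, hH]
    push_cast
    ring

end AuxiliaryForm

section Heights

/-- The sum of the absolute values of the coefficients of an integer polynomial. -/
def coeffLength (p : ℤ[X]) : ℤ := ∑ k ∈ p.support, |p.coeff k|

lemma abs_coeff_mul_le {p q : ℤ[X]} {H : ℤ} (hp : ∀ k, |p.coeff k| ≤ H) (k : ℕ) :
    |(p * q).coeff k| ≤ H * coeffLength q := by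
  have hH : 0 ≤ H := (abs_nonneg _).trans (hp 0)
  rw [mul_comm p q, coeff_mul, Finset.Nat.sum_antidiagonal_eq_sum_range_succ_mk]
  calc _ ≤ ∑ j ∈ Finset.range k.succ, |q.coeff j * p.coeff (k - j)| :=
        Finset.abs_sum_le_sum_abs _ _
    _ ≤ ∑ j ∈ Finset.range k.succ, H * |q.coeff j| := by
        refine Finset.sum_le_sum fun j _ => ?_
        rw [abs_mul, mul_comm]
        gcongr
        exact hp _
    _ = H * ∑ j ∈ Finset.range k.succ, |q.coeff j| := by rw [Finset.mul_sum]
    _ ≤ _ := by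
        refine mul_le_mul_of_nonneg_left ?_ hH
        refine (Finset.sum_le_sum_of_subset_of_nonneg
          (Finset.subset_union_left (s₂ := q.support)) fun _ _ _ => abs_nonneg _).trans
          (le_of_eq (Finset.sum_subset Finset.subset_union_right fun j _ hj => ?_).symm)
        rw [notMem_support_iff.mp hj, abs_zero]

variable {ι : Type*} [Fintype ι]

lemma abs_coeff_twist_le {A : Matrix ι ι ℤ[X]} {L : ℕ}
    (hL : ∀ j, ∑ i, coeffLength (A i j) ≤ (L : ℤ)) {P : ι → ℤ[X]} {n : ℕ}
    (hn : ∀ i, (P i).natDegree ≤ n) {H : ℤ} (hP : ∀ i k, |(P i).coeff k| ≤ H) (j : ι) (k : ℕ) :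
    |(twist (eulerPoly ℤ) A P j).coeff k| ≤ ((n + L : ℕ) : ℤ) * H := by
  have hH : 0 ≤ H := (abs_nonneg _).trans (hP j 0)
  unfold twist
  rw [coeff_add, finsetSum_coeff, coeff_eulerPoly]
  have h1 : |(k : ℤ) * (P j).coeff k| ≤ n * H := by
    rcases le_or_gt k n with hk | hk
    · rw [abs_mul, Nat.abs_cast]
      gcongr
      exact hP j k
    · rw [coeff_eq_zero_of_natDegree_lt ((hn j).trans_lt hk)]
      simp only [mul_zero, abs_zero]
      positivity
  have h2 : |∑ i, (P i * A i j).coeff k| ≤ L * H := by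
    calc _ ≤ ∑ i, H * coeffLength (A i j) :=
          (Finset.abs_sum_le_sum_abs _ _).trans
            (Finset.sum_le_sum fun i _ => abs_coeff_mul_le (hP i) k)
      _ ≤ _ := by
          rw [← Finset.mul_sum, mul_comm]
          gcongr
          exact hL j
  push_cast
  rw [add_mul]
  exact (abs_add_le _ _).trans (add_le_add h1 h2)

lemma abs_coeff_twist_iterate_le {A : Matrix ι ι ℤ[X]} {L a : ℕ}
    (hL : ∀ j, ∑ i, coeffLength (A i j) ≤ (L : ℤ)) (hA : ∀ i j, (A i j).natDegree ≤ a)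
    {P : ι → ℤ[X]} {n : ℕ} (hn : ∀ i, (P i).natDegree ≤ n) {H : ℤ}
    (hP : ∀ i k, |(P i).coeff k| ≤ H) (t : ℕ) (j : ι) (k : ℕ) :
    |((twist (eulerPoly ℤ) A)^[t] P j).coeff k| ≤ ((n + a * t + L : ℕ) : ℤ) ^ t * H := by
  have hH : 0 ≤ H := (abs_nonneg _).trans (hP j 0)
  induction t generalizing j k with
  | zero => simpa using hP j k
  | succ t ih =>
    rw [Function.iterate_succ_apply']
    refine (abs_coeff_twist_le hL (natDegree_twist_iterate_le hA hn t) ih j k).trans ?_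
    have hle : ((n + a * t + L : ℕ) : ℤ) ≤ ((n + a * (t + 1) + L : ℕ) : ℤ) := by
      push_cast
      nlinarith
    calc _ ≤ ((n + a * (t + 1) + L : ℕ) : ℤ) * (((n + a * (t + 1) + L : ℕ) : ℤ) ^ t * H) := by
          gcongr
      _ = _ := by ring

lemma norm_aeval_le {p : ℤ[X]} {n : ℕ} {H : ℝ} (hn : p.natDegree ≤ n)
    (hp : ∀ k, |(p.coeff k : ℝ)| ≤ H) {z : ℂ} {ϱ : ℝ} (hϱ : 1 ≤ ϱ) (hz : ‖z‖ ≤ ϱ) :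
    ‖aeval z p‖ ≤ (n + 1) * (H * ϱ ^ n) := by
  have hH : 0 ≤ H := (abs_nonneg _).trans (hp 0)
  rw [aeval_eq_sum_range' (n := n + 1) (by omega)]
  refine (norm_sum_le_of_le _ (n := fun _ => H * ϱ ^ n) fun k hk => ?_).trans (le_of_eq ?_)
  swap
  · rw [Finset.sum_const, Finset.card_range, nsmul_eq_mul]
    push_cast
    ring
  rw [zsmul_eq_mul, norm_mul, Complex.norm_intCast, norm_pow]
  have hk' : k ≤ n := by simpa [Nat.lt_succ_iff] using hk
  refine mul_le_mul (hp k) ?_ (by positivity) hH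
  exact (pow_le_pow_left₀ (norm_nonneg z) hz k).trans (pow_le_pow_right₀ hϱ hk')

lemma isIntegral_pow_smul_aeval {K : Type*} [Field K] {ω : ℤ} {ρ : K} (hρ : IsIntegral ℤ (ω • ρ))
    {p : ℤ[X]} {n : ℕ} (hn : p.natDegree ≤ n) : IsIntegral ℤ ((ω : K) ^ n * aeval ρ p) := by
  rw [aeval_eq_sum_range' (n := n + 1) (by omega), Finset.mul_sum]
  refine IsIntegral.sum _ fun k hk => ?_
  have hk' : k ≤ n := by simpa [Nat.lt_succ_iff] using hk
  have h : (ω : K) ^ n * p.coeff k • ρ ^ k =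
      ((p.coeff k * ω ^ (n - k) : ℤ) : K) * (ω • ρ) ^ k := by
    rw [zsmul_eq_mul, zsmul_eq_mul, mul_pow]
    push_cast
    rw [← Nat.sub_add_cancel hk', pow_add]
    simp only [Nat.add_sub_cancel]
    ring
  rw [h]
  exact (isIntegral_algebraMap (R := ℤ) (A := K) (x := p.coeff k * ω ^ (n - k))).mul (hρ.pow k)

/-- Liouville's inequality for a nonzero algebraic integer. -/
lemma one_le_mul_pow_of_isIntegral {K : Type*} [Field K] [NumberField K] (φ : K →ₐ[ℚ] ℂ) {γ : K}
    (hγ : γ ≠ 0) (hint : IsIntegral ℤ γ) {V U : ℝ} (hV : ‖φ γ‖ ≤ V)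
    (hU : ∀ σ : K →ₐ[ℚ] ℂ, ‖σ γ‖ ≤ U) : 1 ≤ V * U ^ (Module.finrank ℚ K - 1) := by
  classical
  have hnorm := Algebra.norm_eq_prod_embeddings ℚ ℂ γ
  have hi : IsIntegral ℤ (Algebra.norm ℚ γ) := Algebra.isIntegral_norm ℚ hint
  obtain ⟨m, hm⟩ := IsIntegrallyClosed.isIntegral_iff.mp hi
  have hm0 : m ≠ 0 := by
    rintro rfl
    rw [map_zero] at hm
    exact hγ ((Algebra.norm_eq_zero_iff).mp hm.symm)
  have h1 : (1 : ℝ) ≤ ‖∏ σ : K →ₐ[ℚ] ℂ, σ γ‖ := by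
    rw [← hnorm, ← hm]
    simp only [algebraMap_int_eq, eq_intCast, map_intCast, Complex.norm_intCast]
    exact_mod_cast Int.one_le_abs hm0
  have hU0 : 0 ≤ U := (norm_nonneg _).trans (hU φ)
  rw [norm_prod, ← Finset.mul_prod_erase _ _ (Finset.mem_univ φ)] at h1
  refine h1.trans (mul_le_mul hV ?_ (Finset.prod_nonneg fun _ _ => norm_nonneg _)
    ((norm_nonneg _).trans hV))
  refine (Finset.prod_le_prod (fun _ _ => norm_nonneg _) fun σ _ => hU σ).trans (le_of_eq ?_)
  rw [Finset.prod_const, Finset.card_erase_of_mem (Finset.mem_univ φ), Finset.card_univ,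
    AlgHom.card]

end Heights

section Growth

/-- The sequence `u` is nonnegative and bounded by `(G * h ^ a) ^ h` for some constant `G`. -/
def HBound (a : ℕ) (u : ℕ → ℝ) : Prop :=
  ∃ G : ℝ, 1 ≤ G ∧ ∀ h : ℕ, 1 ≤ h → 0 ≤ u h ∧ u h ≤ (G * (h : ℝ) ^ a) ^ h

lemma HBound.const {c : ℝ} (hc : 0 ≤ c) : HBound 0 fun _ => c := by
  refine ⟨max 1 c, le_max_left _ _, fun h hh => ⟨hc, ?_⟩⟩
  rw [pow_zero, mul_one]
  exact (le_max_right 1 c).trans (le_self_pow₀ (le_max_left _ _) (by omega))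

lemma HBound.mul {a b : ℕ} {u v : ℕ → ℝ} (hu : HBound a u) (hv : HBound b v) :
    HBound (a + b) fun h => u h * v h := by
  obtain ⟨G, hG, hu⟩ := hu
  obtain ⟨G', hG', hv⟩ := hv
  refine ⟨G * G', one_le_mul_of_one_le_of_one_le hG hG', fun h hh =>
    ⟨mul_nonneg (hu h hh).1 (hv h hh).1, ?_⟩⟩
  calc u h * v h ≤ (G * (h : ℝ) ^ a) ^ h * (G' * (h : ℝ) ^ b) ^ h :=
        mul_le_mul (hu h hh).2 (hv h hh).2 (hv h hh).1 (by positivity)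
    _ = _ := by rw [← mul_pow, pow_add]; ring

lemma HBound.pow {a : ℕ} {u : ℕ → ℝ} (hu : HBound a u) (k : ℕ) :
    HBound (a * k) fun h => u h ^ k := by
  induction k with
  | zero => simpa using HBound.const zero_le_one
  | succ k ih => simpa only [pow_succ, Nat.mul_succ] using ih.mul hu

lemma HBound.mono {a : ℕ} {u v : ℕ → ℝ} (hu : HBound a u)
    (hv : ∀ h, 1 ≤ h → 0 ≤ v h ∧ v h ≤ u h) : HBound a v := by
  obtain ⟨G, hG, hu⟩ := hu
  exact ⟨G, hG, fun h hh => ⟨(hv h hh).1, (hv h hh).2.trans (hu h hh).2⟩⟩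

lemma HBound.const_pow {c : ℝ} (hc : 0 ≤ c) (α β : ℕ) : HBound 0 fun h => c ^ (α * h + β) := by
  refine ⟨max 1 c ^ (α + β), one_le_pow₀ (le_max_left _ _), fun h hh => ⟨by positivity, ?_⟩⟩
  rw [pow_zero, mul_one, ← pow_mul]
  calc c ^ (α * h + β) ≤ max 1 c ^ (α * h + β) := by
        gcongr
        exact le_max_right _ _
    _ ≤ _ := pow_le_pow_right₀ (le_max_left _ _) (by nlinarith)

lemma HBound.linear (α β : ℕ) : HBound 0 fun h => ((α * h + β : ℕ) : ℝ) := by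
  have h2 : HBound 0 fun h : ℕ => (h : ℝ) := by
    refine ⟨2, one_le_two, fun h _ => ⟨by positivity, ?_⟩⟩
    rw [pow_zero, mul_one]
    have := (Nat.lt_two_pow_self (n := h)).le
    beta_reduce
    exact_mod_cast this
  refine ((HBound.const (c := (α + β : ℕ)) (by positivity)).mul h2).mono fun h hh =>
    ⟨by positivity, ?_⟩
  have : α * h + β ≤ (α + β) * h := by nlinarith
  exact_mod_cast this

lemma HBound.linear_pow_linear (α β γ η : ℕ) :
    HBound γ fun h => ((α * h + β : ℕ) : ℝ) ^ (γ * h + η) := by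
  have h1 : HBound γ fun h : ℕ => ((α * h + β : ℕ) : ℝ) ^ (γ * h) := by
    refine ⟨((α + β + 1 : ℕ) : ℝ) ^ γ, one_le_pow₀ (by norm_cast; omega), fun h hh =>
      ⟨by positivity, ?_⟩⟩
    beta_reduce
    rw [← mul_pow, pow_mul]
    have : α * h + β ≤ (α + β + 1) * h := by nlinarith
    have h2 : ((α * h + β : ℕ) : ℝ) ≤ ((α + β + 1 : ℕ) : ℝ) * h := by exact_mod_cast this
    gcongr
  simpa only [pow_add, Nat.add_zero, Nat.zero_mul] using h1.mul ((HBound.linear α β).pow η)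

lemma HBound.false_of_factorial_le {a μ : ℕ} (haμ : a < μ) {u : ℕ → ℝ} (hu : HBound a u) {h₀ : ℕ}
    (hle : ∀ h, h₀ ≤ h → ((μ * h).factorial : ℝ) ≤ u h) : False := by
  obtain ⟨G, hG, hu⟩ := hu
  obtain ⟨h, hh⟩ := exists_nat_gt (G * Real.exp μ + h₀ + 1)
  have hpos : 0 < G * Real.exp μ := by positivity
  have hh0 : h₀ ≤ h := by
    have : (h₀ : ℝ) ≤ h := by linarith
    exact_mod_cast this
  have hh1 : 1 ≤ h := by
    have h0 : (0 : ℝ) ≤ h₀ := by positivity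
    have : (1 : ℝ) ≤ h := by linarith
    exact_mod_cast this
  have hh1' : (1 : ℝ) ≤ h := by exact_mod_cast hh1
  have h1 := Real.pow_div_factorial_le_exp ((μ * h : ℕ) : ℝ) (by positivity) (μ * h)
  rw [div_le_iff₀ (by positivity)] at h1
  have h2 : ((h : ℝ) ^ μ) ^ h ≤ (Real.exp μ * (G * (h : ℝ) ^ a)) ^ h := by
    calc ((h : ℝ) ^ μ) ^ h = (h : ℝ) ^ (μ * h) := by rw [pow_mul]
      _ ≤ ((μ * h : ℕ) : ℝ) ^ (μ * h) := by
          gcongr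
          have : 1 ≤ μ := by omega
          nlinarith
      _ ≤ Real.exp ((μ * h : ℕ) : ℝ) * (G * (h : ℝ) ^ a) ^ h :=
          h1.trans (mul_le_mul_of_nonneg_left ((hle h hh0).trans (hu h hh1).2)
            (Real.exp_pos _).le)
      _ = _ := by
          rw [mul_pow (Real.exp μ), ← Real.exp_nat_mul]
          push_cast
          rw [mul_comm (μ : ℝ)]
  have h3 := le_of_pow_le_pow_left₀ (by omega : h ≠ 0) (by positivity) h2
  have h4 : (h : ℝ) ^ (a + 1) ≤ (h : ℝ) ^ μ := pow_le_pow_right₀ hh1' haμ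
  have h5 : (h : ℝ) * (h : ℝ) ^ a ≤ (G * Real.exp μ) * (h : ℝ) ^ a := by
    calc _ = (h : ℝ) ^ (a + 1) := by rw [pow_succ, mul_comm]
      _ ≤ _ := (h4.trans h3).trans (le_of_eq (by ring))
  have h6 : (h : ℝ) ≤ G * Real.exp μ := le_of_mul_le_mul_right h5 (by positivity)
  have h0 : (0 : ℝ) ≤ h₀ := by positivity
  linarith

end Growth

section Siegel

variable {ι : Type*} [Fintype ι] {A : Matrix ι ι ℤ[X]} {Y : ι → PowerSeries ℚ} {D B : ℕ}
  {K : Type*} [Field K] [NumberField K]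

/-- The basic inequality of Siegel's method: an auxiliary form is small, whereas its value is a
nonzero algebraic number of controlled height. -/
lemma factorial_le_of_auxiliary_form (hD : 0 < D) (hB : 0 < B) (hE : ∀ i, IsEType D B (Y i))
    (hY : ∀ i, eulerPS ℚ (Y i) = ∑ j, intPolyToPS (A i j) * Y j)
    (φ : K →ₐ[ℚ] ℂ) {ρ : K} {w : ι → K} {c : ℂ} (hc : c ≠ 0)
    (hval : ∀ i, psEval (φ ρ) (Y i) = c * φ (w i))
    {a L : ℕ} (hA : ∀ i j, (A i j).natDegree ≤ a)
    (hL : ∀ j, ∑ i, coeffLength (A i j) ≤ (L : ℤ))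
    {ω : ℤ} (hω : ω ≠ 0) (hωρ : IsIntegral ℤ (ω • ρ)) (hωw : ∀ i, IsIntegral ℤ (ω • w i))
    {ϱ : ℝ} (hϱ : 1 ≤ ϱ) (hρϱ : ∀ σ : K →ₐ[ℚ] ℂ, ‖σ ρ‖ ≤ ϱ)
    (hwϱ : ∀ (σ : K →ₐ[ℚ] ℂ) i, ‖σ (w i)‖ ≤ ϱ)
    {n T q m : ℕ} (hn : 1 ≤ n) (hnT : n ≤ T) (hmT : m ≤ T)
    (hlt : T < Fintype.card ι * (n + 1)) (hq : T ≤ q * (Fintype.card ι * (n + 1) - T))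
    (hzero : ∀ P : ι → ℤ[X], P ≠ 0 → (∀ i, (P i).natDegree ≤ n) →
      PowerSeries.X ^ T ∣ ∑ i, intPolyToPS (P i) * Y i →
      ∃ t ≤ m, ∑ i, aeval ρ ((twist (eulerPoly ℤ) A)^[t] P i) * w i ≠ 0)
    {H : ℕ} (hH : H = (Fintype.card ι * (n + 1) * (D ^ n * T ^ n * B ^ T)) ^ q)
    {N : ℕ} (hN : N = n + a * m) :
    ((T - n).factorial : ℝ) ≤
      (|(ω : ℝ)| ^ (N + 1) * ((Fintype.card ι * (n + 1) * H * B) * (T : ℝ) ^ m * (B * ϱ) ^ T *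
        Real.exp (Real.exp 1 * (B * ϱ)) / ‖c‖)) *
      (|(ω : ℝ)| ^ (N + 1) * (Fintype.card ι * (((N + 1) *
        ((((N + L : ℕ) : ℝ) ^ m * H) * ϱ ^ N)) * ϱ))) ^ (Module.finrank ℚ K - 1) := by
  obtain ⟨P, H', hH', hP0, hPn, hPH, hPT, hPs⟩ :=
    exists_auxiliary_form hD hB hE (by omega : 0 < T) hlt hq
  rw [← hH] at hH'
  subst hH'
  obtain ⟨t, htm, hβ⟩ := hzero P hP0 hPn hPT
  set β : K := ∑ i, aeval ρ ((twist (eulerPoly ℤ) A)^[t] P i) * w i with hβdef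
  have hdeg : ∀ i, ((twist (eulerPoly ℤ) A)^[t] P i).natDegree ≤ N := fun i =>
    (natDegree_twist_iterate_le hA hPn t i).trans (by rw [hN]; gcongr)
  have hcoef : ∀ i k, |((((twist (eulerPoly ℤ) A)^[t] P i).coeff k : ℤ) : ℝ)| ≤
      ((N + L : ℕ) : ℝ) ^ m * H' := by
    intro i k
    have h1 := abs_coeff_twist_iterate_le hL hA hPn hPH t i k
    have h2 : ((n + a * t + L : ℕ) : ℤ) ^ t * (H' : ℤ) ≤ ((N + L : ℕ) : ℤ) ^ m * H' := by
      gcongr ?_ * _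
      calc ((n + a * t + L : ℕ) : ℤ) ^ t ≤ ((N + L : ℕ) : ℤ) ^ t := by
            gcongr
            rw [hN]
            gcongr
        _ ≤ _ := pow_le_pow_right₀ (by norm_cast; omega) htm
    exact_mod_cast h1.trans h2
  have hσ : ∀ σ : K →ₐ[ℚ] ℂ, σ β =
      ∑ i, aeval (σ ρ) ((twist (eulerPoly ℤ) A)^[t] P i) * σ (w i) := by
    intro σ
    rw [hβdef, map_sum]
    refine Finset.sum_congr rfl fun i _ => ?_
    rw [map_mul]
    congr 1
    exact (Polynomial.aeval_algHom_apply (σ.restrictScalars ℤ) ρ _).symm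
  -- house of the value
  have hU : ∀ σ : K →ₐ[ℚ] ℂ, ‖σ β‖ ≤
      Fintype.card ι * (((N + 1) * ((((N + L : ℕ) : ℝ) ^ m * H') * ϱ ^ N)) * ϱ) := by
    intro σ
    rw [hσ]
    refine (norm_sum_le_of_le _ (n := fun _ => ((N + 1) *
      ((((N + L : ℕ) : ℝ) ^ m * H') * ϱ ^ N)) * ϱ) fun i _ => ?_).trans (le_of_eq ?_)
    · rw [norm_mul]
      exact mul_le_mul (norm_aeval_le (hdeg i) (hcoef i) hϱ (hρϱ σ)) (hwϱ σ i)
        (norm_nonneg _) (by positivity)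
    · rw [Finset.sum_const, Finset.card_univ, nsmul_eq_mul]
  -- smallness of the value
  have hV : ‖φ β‖ ≤ ((Fintype.card ι * (n + 1) * H' * B) * (T : ℝ) ^ m * (B * ϱ) ^ T *
        Real.exp (Real.exp 1 * (B * ϱ)) / ‖c‖) / (T - n).factorial := by
    have h1 : c * φ β =
        psEval (φ ρ) ((eulerPS ℚ)^[t] (∑ i, intPolyToPS (P i) * Y i)) := by
      rw [derivation_iterate_dotProduct (eulerPS ℚ) (A.map intPolyToPS) (fun i => intPolyToPS (P i))
        Y hY]
      have h2 := map_twist_iterate intPolyToPS (eulerPoly ℤ) (eulerPS ℚ) intPolyToPS_euler A P t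
      have h3 : ∀ i, (twist (eulerPS ℚ) (A.map intPolyToPS))^[t] (fun i => intPolyToPS (P i)) i =
          intPolyToPS ((twist (eulerPoly ℤ) A)^[t] P i) := fun i => (congr_fun h2 i).symm
      simp only [h3]
      rw [psEval_dotProduct fun i => (hE i).summable hD _, hσ, Finset.mul_sum]
      refine Finset.sum_congr rfl fun i _ => ?_
      rw [hval]
      ring
    have h2 := norm_psEval_euler_le (t := t) (x := φ ρ) (by omega : 0 < T) (htm.trans hmT) hnT
      (by positivity) (by positivity) (hρϱ φ) hPT hPs
    rw [← h1, norm_mul] at h2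
    have hc' : 0 < ‖c‖ := norm_pos_iff.mpr hc
    have hT1 : (1 : ℝ) ≤ T := by
      norm_cast
      omega
    rw [div_div, mul_comm ‖c‖, ← div_div, le_div_iff₀ hc', mul_comm]
    refine h2.trans ?_
    rw [div_mul_eq_mul_div]
    gcongr
  have hint : IsIntegral ℤ ((ω : K) ^ (N + 1) * β) := by
    rw [hβdef, Finset.mul_sum]
    refine IsIntegral.sum _ fun i _ => ?_
    have h : (ω : K) ^ (N + 1) * (aeval ρ ((twist (eulerPoly ℤ) A)^[t] P i) * w i) =
        ((ω : K) ^ N * aeval ρ ((twist (eulerPoly ℤ) A)^[t] P i)) * (ω • w i) := by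
      rw [zsmul_eq_mul]
      ring
    rw [h]
    exact (isIntegral_pow_smul_aeval hωρ (hdeg i)).mul (hωw i)
  have hω' : ∀ σ : K →ₐ[ℚ] ℂ, ‖σ ((ω : K) ^ (N + 1) * β)‖ = |(ω : ℝ)| ^ (N + 1) * ‖σ β‖ := by
    intro σ
    rw [map_mul, map_pow, map_intCast, norm_mul, norm_pow, Complex.norm_intCast]
  have hmain := one_le_mul_pow_of_isIntegral φ
    (mul_ne_zero (pow_ne_zero _ (by exact_mod_cast hω)) hβ) hint
    ((hω' φ).le.trans (mul_le_mul_of_nonneg_left hV (by positivity)))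
    (fun σ => (hω' σ).le.trans (mul_le_mul_of_nonneg_left (hU σ) (by positivity)))
  rw [← mul_div_assoc, div_mul_eq_mul_div, le_div_iff₀ (by positivity), one_mul] at hmain
  exact hmain

/-- Siegel's method. A system of `E`-type power series satisfying a linear differential system,
for which a sharp enough zero estimate holds, cannot take proportionally algebraic values in a
number field of small degree at an algebraic point. -/
theorem siegel_method (hD : 0 < D) (hB : 0 < B) (hE : ∀ i, IsEType D B (Y i))
    (hY : ∀ i, eulerPS ℚ (Y i) = ∑ j, intPolyToPS (A i j) * Y j)
    (φ : K →ₐ[ℚ] ℂ) {ρ : K} {w : ι → K} {c : ℂ} (hc : c ≠ 0)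
    (hval : ∀ i, psEval (φ ρ) (Y i) = c * φ (w i)) {δ : ℕ} (hδ : Module.finrank ℚ K = δ)
    (hcard : (δ + 2) * (δ ^ 2 + δ + 1) < Fintype.card ι) {c₁ : ℕ}
    (hzero : ∀ (P : ι → ℤ[X]) (n T t : ℕ), P ≠ 0 → (∀ i, (P i).natDegree ≤ n) →
      PowerSeries.X ^ T ∣ ∑ i, intPolyToPS (P i) * Y i →
      (∀ k < t, ∑ i, aeval ρ ((twist (eulerPoly ℤ) A)^[k] P i) * w i = 0) →
      T + t ≤ Fintype.card ι * n + c₁) : False := by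
  classical
  set M := Fintype.card ι with hM
  obtain ⟨a, hA⟩ : ∃ a, ∀ i j, (A i j).natDegree ≤ a :=
    ⟨Finset.univ.sup fun p : ι × ι => (A p.1 p.2).natDegree, fun i j =>
      Finset.le_sup (f := fun p : ι × ι => (A p.1 p.2).natDegree) (Finset.mem_univ (i, j))⟩
  obtain ⟨L, hL⟩ : ∃ L : ℕ, ∀ j, ∑ i, coeffLength (A i j) ≤ (L : ℤ) :=
    ⟨Finset.univ.sup fun j => (∑ i, coeffLength (A i j)).toNat, fun j =>
      (Int.self_le_toNat _).trans (by
        exact_mod_cast Finset.le_sup (f := fun j => (∑ i, coeffLength (A i j)).toNat)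
          (Finset.mem_univ j))⟩
  obtain ⟨ω, hω, hωi⟩ := exists_integral_multiples ℤ ℚ (insert ρ (Finset.univ.image w))
  set ϱ : ℝ := 1 + ∑ σ : K →ₐ[ℚ] ℂ, (‖σ ρ‖ + ∑ i, ‖σ (w i)‖) with hϱdef
  have hsum : ∀ σ : K →ₐ[ℚ] ℂ, ‖σ ρ‖ + ∑ i, ‖σ (w i)‖ ≤ ϱ := fun σ => by
    have := Finset.single_le_sum (f := fun σ : K →ₐ[ℚ] ℂ => ‖σ ρ‖ + ∑ i, ‖σ (w i)‖)
      (fun σ _ => by positivity) (Finset.mem_univ σ)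
    linarith
  have hϱ : 1 ≤ ϱ := by
    have : 0 ≤ ∑ σ : K →ₐ[ℚ] ℂ, (‖σ ρ‖ + ∑ i, ‖σ (w i)‖) := by positivity
    linarith
  have hρϱ : ∀ σ : K →ₐ[ℚ] ℂ, ‖σ ρ‖ ≤ ϱ := fun σ =>
    (le_add_of_nonneg_right (by positivity)).trans (hsum σ)
  have hwϱ : ∀ (σ : K →ₐ[ℚ] ℂ) i, ‖σ (w i)‖ ≤ ϱ := fun σ i =>
    ((Finset.single_le_sum (f := fun i => ‖σ (w i)‖) (fun _ _ => norm_nonneg _)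
      (Finset.mem_univ i)).trans (le_add_of_nonneg_left (norm_nonneg _))).trans (hsum σ)
  have hδ1 : 1 ≤ δ := hδ ▸ Module.finrank_pos
  have hM1 : δ + 2 < M := by nlinarith
  -- the parameters
  let H : ℕ → ℕ := fun h => (M * ((δ + 2) * h + 1) *
    (D ^ ((δ + 2) * h) * (M * (δ + 1) * h) ^ ((δ + 2) * h) * B ^ (M * (δ + 1) * h))) ^ (δ + 1)
  let N : ℕ → ℕ := fun h => (δ + 2) * h + a * (M * h + c₁)
  let W : ℕ → ℝ := fun h => |(ω : ℝ)| ^ (N h + 1)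
  let V : ℕ → ℝ := fun h => (M * (((δ + 2) * h : ℕ) + 1) * H h * B) *
    ((M * (δ + 1) * h : ℕ) : ℝ) ^ (M * h + c₁) * (B * ϱ) ^ (M * (δ + 1) * h) *
      Real.exp (Real.exp 1 * (B * ϱ)) / ‖c‖
  let U : ℕ → ℝ := fun h => M * (((N h + 1) *
    ((((N h + L : ℕ) : ℝ) ^ (M * h + c₁) * H h) * ϱ ^ N h)) * ϱ)
  have hHb : HBound ((δ + 2) * (δ + 1)) fun h => (H h : ℝ) := by
    have h1 := HBound.linear (M * (δ + 2)) M
    have h2 := HBound.const_pow (c := (D : ℝ)) (by positivity) (δ + 2) 0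
    have h3 := HBound.linear_pow_linear (M * (δ + 1)) 0 (δ + 2) 0
    have h4 := HBound.const_pow (c := (B : ℝ)) (by positivity) (M * (δ + 1)) 0
    have h5 := (h1.mul ((h2.mul h3).mul h4)).pow (δ + 1)
    rw [show (0 + (0 + (δ + 2) + 0)) * (δ + 1) = (δ + 2) * (δ + 1) by ring] at h5
    refine h5.mono fun h _ => ⟨by positivity, le_of_eq ?_⟩
    simp only [H, Nat.add_zero]
    push_cast
    ring
  have hNlin : ∀ h, N h = (δ + 2 + a * M) * h + a * c₁ := fun h => by
    simp only [N]
    ring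
  have hWb : HBound 0 W := by
    refine (HBound.const_pow (c := |(ω : ℝ)|) (by positivity) (δ + 2 + a * M) (a * c₁ + 1)).mono
      fun h _ => ⟨by positivity, le_of_eq ?_⟩
    simp only [W, hNlin]
    ring_nf
  have hϱ0 : 0 ≤ ϱ := by linarith
  have hVb : HBound ((δ + 2) * (δ + 1) + M) V := by
    have h1 := HBound.linear (M * (δ + 2)) M
    have h2 := HBound.const (c := B * Real.exp (Real.exp 1 * (B * ϱ)) / ‖c‖) (by positivity)
    have h3 := HBound.linear_pow_linear (M * (δ + 1)) 0 M c₁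
    have h4 := HBound.const_pow (c := B * ϱ) (by positivity) (M * (δ + 1)) 0
    have h5 := (((h1.mul hHb).mul h2).mul h3).mul h4
    rw [show 0 + (δ + 2) * (δ + 1) + 0 + M + 0 = (δ + 2) * (δ + 1) + M by ring] at h5
    refine h5.mono fun h _ => ⟨by positivity, le_of_eq ?_⟩
    simp only [V, Nat.add_zero]
    push_cast
    ring
  have hUb : HBound ((δ + 2) * (δ + 1) + M) U := by
    have h1 := HBound.linear (δ + 2 + a * M) (a * c₁ + 1)
    have h2 := HBound.const (c := M * ϱ) (by positivity)
    have h3 := HBound.linear_pow_linear (δ + 2 + a * M) (a * c₁ + L) M c₁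
    have h4 := HBound.const_pow (c := ϱ) (by positivity) (δ + 2 + a * M) (a * c₁)
    have h5 := (((h1.mul h2).mul h3).mul hHb).mul h4
    rw [show 0 + 0 + M + (δ + 2) * (δ + 1) + 0 = (δ + 2) * (δ + 1) + M by ring] at h5
    refine h5.mono fun h _ => ⟨by positivity, le_of_eq ?_⟩
    simp only [U, hNlin]
    rw [show (δ + 2 + a * M) * h + a * c₁ + L = (δ + 2 + a * M) * h + (a * c₁ + L) by ring]
    push_cast
    ring
  have hall := (hWb.mul hVb).mul ((hWb.mul hUb).pow (δ - 1))
  refine hall.false_of_factorial_le (μ := M * (δ + 1) - (δ + 2)) (h₀ := c₁ + 1) ?_ fun h hh => ?_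
  · obtain ⟨d, rfl⟩ : ∃ d, δ = d + 1 := ⟨δ - 1, by omega⟩
    simp only [Nat.add_sub_cancel]
    rw [Nat.lt_sub_iff_add_lt]
    nlinarith
  · have hh1 : 1 ≤ h := by omega
    have hT1 : δ + 2 ≤ M * (δ + 1) := by nlinarith
    have hT2 : (δ + 2) * h ≤ M * (δ + 1) * h := Nat.mul_le_mul_right h hT1
    have hT3 : M * h + c₁ ≤ M * (δ + 1) * h := by
      calc M * h + c₁ ≤ M * h + M * h := by nlinarith
        _ = M * 2 * h := by ring
        _ ≤ _ := by gcongr; omega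
    have key := factorial_le_of_auxiliary_form (n := (δ + 2) * h) (T := M * (δ + 1) * h)
      (q := δ + 1) (m := M * h + c₁) hD hB hE hY φ hc hval hA hL hω
      (hωi _ (by simp)) (fun i => hωi _ (by simp)) hϱ hρϱ hwϱ (by nlinarith) hT2 hT3 ?_ ?_ ?_ rfl rfl
    · rw [hδ] at key
      rw [show (M * (δ + 1) - (δ + 2)) * h = M * (δ + 1) * h - (δ + 2) * h by
        rw [Nat.sub_mul]]
      exact key
    · rw [← hM]
      nlinarith
    · rw [← hM]
      have : M * ((δ + 2) * h + 1) - M * (δ + 1) * h = M * (h + 1) := by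
        rw [Nat.sub_eq_iff_eq_add (by nlinarith)]
        ring
      rw [this]
      nlinarith
    · intro P hP0 hPn hPT
      by_contra! hcon
      have := hzero P _ _ (M * h + c₁ + 1) hP0 hPn hPT fun k hk => hcon k (by omega)
      nlinarith

end Siegel

section HermiteLindemann

lemma coeff_prod_sum_of_natDegree_le {R ι : Type*} [CommRing R] (s : Finset ι) {f : ι → R[X]}
    {n : ι → ℕ} (h : ∀ i, (f i).natDegree ≤ n i) :
    (∏ i ∈ s, f i).natDegree ≤ ∑ i ∈ s, n i ∧
      (∏ i ∈ s, f i).coeff (∑ i ∈ s, n i) = ∏ i ∈ s, (f i).coeff (n i) := by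
  classical
  induction s using Finset.induction_on with
  | empty => simp
  | insert a s ha ih =>
    rw [Finset.prod_insert ha, Finset.sum_insert ha, Finset.prod_insert ha]
    exact ⟨natDegree_mul_le.trans (add_le_add (h a) ih.1), by
      rw [coeff_mul_add_eq_of_natDegree_le (h a) ih.1, ih.2]⟩

lemma twist_diagonal_iterate {S ι : Type*} [CommRing S] [Fintype ι] [DecidableEq ι]
    (d : RingDerivation S) (v : ι → S) (P : ι → S) (k : ℕ) (j : ι) :
    (twist d (Matrix.diagonal v))^[k] P j = (fun p => d p + p * v j)^[k] (P j) := by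
  induction k generalizing P with
  | zero => rfl
  | succ k ih =>
    rw [Function.iterate_succ_apply, Function.iterate_succ_apply, ih]
    congr 1
    simp [twist, Matrix.diagonal_apply]

lemma iterate_euler_add_mul_X (v : ℤ) (p : ℤ[X]) (k : ℕ) :
    ((fun p => eulerPoly ℤ p + p * (C v * X))^[k] p).natDegree ≤ p.natDegree + k ∧
      ((fun p => eulerPoly ℤ p + p * (C v * X))^[k] p).coeff (p.natDegree + k) =
        p.leadingCoeff * v ^ k := by
  induction k with
  | zero => simp
  | succ k ih =>
    rw [Function.iterate_succ_apply']
    set q := (fun p => eulerPoly ℤ p + p * (C v * X))^[k] p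
    refine ⟨(natDegree_add_le _ _).trans (max_le ?_ ?_), ?_⟩
    · exact ((natDegree_eulerPoly_le q).trans ih.1).trans (by omega)
    · exact natDegree_mul_le.trans ((add_le_add ih.1
        ((natDegree_C_mul_le _ _).trans natDegree_X_le)).trans (le_of_eq (add_assoc _ _ _)))
    · rw [coeff_add, coeff_eulerPoly, coeff_eq_zero_of_natDegree_lt (by omega : q.natDegree < _),
        ← mul_assoc, mul_comm q (C v), ← add_assoc, coeff_mul_X, coeff_C_mul, ih.2]
      ring

lemma det_twist_diagonal_ne_zero {ι : Type*} [Fintype ι] [DecidableEq ι] {v : ι → ℤ}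
    (hv : Function.Injective v) {P : ι → ℤ[X]} (hP : ∀ i, P i ≠ 0)
    (e : ι ≃ Fin (Fintype.card ι)) :
    (Matrix.of fun i j =>
      (twist (eulerPoly ℤ) (Matrix.diagonal fun i => C (v i) * X))^[(e i : ℕ)] P j).det ≠ 0 := by
  let V : Matrix ι ι ℤ := Matrix.of fun i j => v j ^ (e i : ℕ)
  have hV : V.det ≠ 0 := by
    have h : V = ((Matrix.vandermonde (v ∘ e.symm)).transpose).submatrix e e := by
      ext i j
      simp [V, Matrix.vandermonde]
    rw [h, Matrix.det_submatrix_equiv_self, Matrix.det_transpose,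
      Matrix.det_vandermonde_ne_zero_iff]
    exact hv.comp e.symm.injective
  intro hdet
  have hc := congr_arg (fun q : ℤ[X] => q.coeff (∑ j, (P j).natDegree + ∑ j, (e j : ℕ))) hdet
  simp only [coeff_zero] at hc
  rw [Matrix.det_apply', finsetSum_coeff] at hc
  have hterm : ∀ σ : Equiv.Perm ι, (((Equiv.Perm.sign σ : ℤ) : ℤ[X]) * ∏ j, (Matrix.of fun i j =>
      (twist (eulerPoly ℤ) (Matrix.diagonal fun i => C (v i) * X))^[(e i : ℕ)] P j)
        (σ j) j).coeff (∑ j, (P j).natDegree + ∑ j, (e j : ℕ)) =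
      (Equiv.Perm.sign σ : ℤ) * ∏ j, (Matrix.of fun i j =>
        (P j).leadingCoeff * V i j) (σ j) j := by
    intro σ
    have h1 : ∑ j, (P j).natDegree + ∑ j, (e j : ℕ) =
        ∑ j, ((P j).natDegree + (e (σ j) : ℕ)) := by
      rw [Finset.sum_add_distrib, Equiv.sum_comp σ fun j => (e j : ℕ)]
    rw [h1, coeff_intCast_mul]
    congr 1
    rw [(coeff_prod_sum_of_natDegree_le Finset.univ fun j => ?_).2]
    · refine Finset.prod_congr rfl fun j _ => ?_
      simp only [Matrix.of_apply, twist_diagonal_iterate]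
      exact (iterate_euler_add_mul_X (v j) (P j) _).2
    · simp only [Matrix.of_apply, twist_diagonal_iterate]
      exact (iterate_euler_add_mul_X (v j) (P j) _).1
  have hdet0 : (Matrix.of fun i j => (P j).leadingCoeff * V i j).det = 0 := by
    rw [Matrix.det_apply', ← hc]
    exact Finset.sum_congr rfl fun σ _ => (hterm σ).symm
  rw [Matrix.det_mul_row] at hdet0
  refine (mul_ne_zero (Finset.prod_ne_zero_iff.mpr fun j _ => ?_) hV) hdet0
  exact leadingCoeff_ne_zero.mpr (hP j)

/-- The power series of `exp (m * x)`. -/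
noncomputable def expPS (m : ℕ) : PowerSeries ℚ :=
  PowerSeries.mk fun k => (m : ℚ) ^ k / (k.factorial : ℚ)

lemma eulerPS_expPS (m : ℕ) :
    eulerPS ℚ (expPS m) = intPolyToPS (C (m : ℤ) * X) * expPS m := by
  have h : intPolyToPS (C (m : ℤ) * X) = PowerSeries.C (m : ℚ) * PowerSeries.X := by
    ext k
    rw [coeff_intPolyToPS, PowerSeries.coeff_C_mul, PowerSeries.coeff_X, coeff_C_mul, coeff_X]
    simp [eq_comm]
  ext k
  rw [coeff_eulerPS, h, mul_assoc, PowerSeries.coeff_C_mul]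
  cases k with
  | zero => simp [expPS]
  | succ k =>
    rw [PowerSeries.coeff_succ_X_mul, expPS, PowerSeries.coeff_mk, PowerSeries.coeff_mk,
      Nat.factorial_succ]
    have : (k.factorial : ℚ) ≠ 0 := by exact_mod_cast Nat.factorial_ne_zero k
    have h2 : (k : ℚ) + 1 ≠ 0 := by positivity
    push_cast
    field_simp
    ring

lemma psEval_expPS (x : ℂ) (m : ℕ) : psEval x (expPS m) = Complex.exp x ^ m := by
  rw [← Complex.exp_nat_mul, Complex.exp_eq_exp_ℂ, NormedSpace.exp_eq_tsum_div]
  refine tsum_congr fun k => ?_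
  simp only [expPS, PowerSeries.coeff_mk]
  push_cast
  rw [mul_pow]
  ring

/-- The Hermite–Lindemann theorem: the exponential of a nonzero algebraic number is
transcendental. -/
theorem transcendental_exp_of_isAlgebraic {α : ℂ} (hα : α ≠ 0) (halg : IsAlgebraic ℚ α) :
    Transcendental ℚ (Complex.exp α) := by
  intro hexp
  let K := IntermediateField.adjoin ℚ ({α, Complex.exp α} : Set ℂ)
  have : FiniteDimensional ℚ K := by
    refine IntermediateField.finiteDimensional_adjoin fun x hx => ?_
    rcases hx with rfl | hx
    · exact halg.isIntegral
    · rw [Set.mem_singleton_iff.mp hx]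
      exact hexp.isIntegral
  have : NumberField K := {}
  let ρ : K := ⟨α, IntermediateField.subset_adjoin ℚ _ (by simp)⟩
  let x : K := ⟨Complex.exp α, IntermediateField.subset_adjoin ℚ _ (by simp)⟩
  have hρ : ρ ≠ 0 := fun h => hα (congr_arg Subtype.val h)
  have hx : x ≠ 0 := fun h => Complex.exp_ne_zero α (congr_arg Subtype.val h)
  set δ := Module.finrank ℚ K with hδ
  set M := (δ + 2) * (δ ^ 2 + δ + 1) + 1 with hM
  refine siegel_method (ι := Fin M) (A := Matrix.diagonal fun i => C ((i : ℕ) : ℤ) * X)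
    (Y := fun i => expPS i) (D := 1) (B := M) one_pos (by omega) (fun i k => ?_) (fun i => ?_)
    (algebraMap K ℂ).toRatAlgHom (ρ := ρ) (w := fun i => x ^ (i : ℕ)) (c := 1) one_ne_zero
    (fun i => ?_) hδ.symm (by simp [hM]) (c₁ := M * M + M) fun P n T t hP0 hPn hPT hPt => ?_
  · refine ⟨(i : ℕ) ^ k, ?_, ?_⟩
    · rw [abs_pow, Nat.abs_cast]
      norm_cast
      exact (Nat.pow_le_pow_left i.2.le k).trans (Nat.pow_le_pow_right (by omega) (by omega))
    · simp [expPS]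
  · rw [eulerPS_expPS, Finset.sum_eq_single i]
    · simp
    · intro j _ hj
      rw [Matrix.diagonal_apply_ne' _ hj]
      simp
    · simp
  · exact (psEval_expPS α i).trans (one_mul (Complex.exp α ^ (i : ℕ))).symm
  · obtain ⟨j₀, hj₀⟩ := Function.ne_iff.mp hP0
    let S := {i : Fin M // P i ≠ 0}
    have hcard : Fintype.card S ≤ M := (Fintype.card_subtype_le _).trans (by simp)
    have hiter : ∀ k (i : Fin M), (twist (eulerPoly ℤ)
        (Matrix.diagonal fun i : Fin M => C ((i : ℕ) : ℤ) * X))^[k] P i =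
        (fun p => eulerPoly ℤ p + p * (C ((i : ℕ) : ℤ) * X))^[k] (P i) :=
      twist_diagonal_iterate _ _ _
    have hsub : ∀ {E : Type} [AddCommMonoid E] (f : Fin M → E), (∀ i, P i = 0 → f i = 0) →
        ∑ i : S, f i = ∑ i, f i := by
      intro E _ f hf
      classical
      rw [← Finset.sum_filter_of_ne (p := fun i => P i ≠ 0) fun i _ h hi => h (hf i hi)]
      exact (Finset.sum_subtype _ (by simp) f).symm
    have key := zero_estimate (ι := S) (A := Matrix.diagonal fun i => C ((i.1 : ℕ) : ℤ) * X)
      (P := fun i => P i.1) (Y := fun i => expPS i.1) (w := fun i => x ^ (i.1 : ℕ)) (n := n)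
      (a := 1) (c := M) (o := 0) (T := T) (t := t) hρ (fun i j => ?_) (fun i => hPn i)
      (fun i => Fintype.equivFin S i) (fun i => ?_)
      (det_twist_diagonal_ne_zero (fun i j h => Subtype.ext (Fin.ext (by exact_mod_cast h)))
        (fun i => i.2) _) (fun i => ?_) (j₀ := ⟨j₀, hj₀⟩) ?_ ?_ (j₁ := ⟨j₀, hj₀⟩)
        (pow_ne_zero _ hx) fun k hk => ?_
    · simp only [Fintype.card_fin]
      nlinarith
    · rcases eq_or_ne i j with rfl | hij
      · rw [Matrix.diagonal_apply_eq]
        exact (natDegree_C_mul_le _ _).trans natDegree_X_le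
      · rw [Matrix.diagonal_apply_ne _ hij]
        simp
    · omega
    · rw [eulerPS_expPS, Finset.sum_eq_single i]
      · simp
      · intro j _ hj
        rw [Matrix.diagonal_apply_ne' _ hj]
        simp
      · simp
    · simp [expPS]
    · rw [hsub fun i => intPolyToPS (P i) * expPS i]
      · exact hPT
      · intro i hi
        simp [hi]
    · have h0 : ∀ i : Fin M, (fun p => eulerPoly ℤ p + p * (C ((i : ℕ) : ℤ) * X))^[k] 0 = 0 :=
        fun i => Function.iterate_fixed (by simp) k
      rw [← hPt k hk, ← hsub]
      · refine Finset.sum_congr rfl fun i _ => ?_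
        rw [hiter, twist_diagonal_iterate]
      · intro i hi
        rw [hiter, hi, h0]
        simp

end HermiteLindemann

section BesselSeries

/-- The coefficients of the normalized Bessel function
`Γ(ν + 1) (x / 2) ^ (-ν) J_ν(x) = ∑ besselCoeff (2ν + 1) m x ^ (2m)`. -/
noncomputable def besselCoeff (p m : ℕ) : ℚ :=
  (-1) ^ m / ∏ j ∈ Finset.range m, ((2 * j + 2) * (p + 2 * j + 1) : ℚ)

/-- The power series of the normalized Bessel function of order `(p - 1) / 2`. -/
noncomputable def besselPS (p : ℕ) : PowerSeries ℚ :=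
  PowerSeries.mk fun k => if Even k then besselCoeff p (k / 2) else 0

lemma coeff_besselPS_two_mul (p m : ℕ) :
    PowerSeries.coeff (2 * m) (besselPS p) = besselCoeff p m := by
  simp [besselPS]

lemma coeff_besselPS_odd (p m : ℕ) : PowerSeries.coeff (2 * m + 1) (besselPS p) = 0 := by
  simp [besselPS]

lemma besselCoeff_succ (p m : ℕ) :
    besselCoeff p (m + 1) * ((2 * m + 2) * (p + 2 * m + 1)) = -besselCoeff p m := by
  have h : ∀ n, ∏ j ∈ Finset.range n, ((2 * j + 2) * (p + 2 * j + 1) : ℚ) ≠ 0 := fun n =>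
    Finset.prod_ne_zero_iff.mpr fun j _ => by positivity
  have h1 := h m
  have h2 : ((2 * m + 2) * (p + 2 * m + 1) : ℚ) ≠ 0 := by positivity
  rw [besselCoeff, besselCoeff, Finset.prod_range_succ]
  field_simp
  ring

lemma besselCoeff_add_two (p m : ℕ) :
    besselCoeff (p + 2) m * (p + 2 * m + 1) = (p + 1) * besselCoeff p m := by
  induction m with
  | zero => simp [besselCoeff]
  | succ m ih =>
    have h1 := besselCoeff_succ p m
    have h2 := besselCoeff_succ (p + 2) m
    have h3 : ((2 * m + 2) * (p + 2 * m + 1) : ℚ) ≠ 0 := by positivity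
    push_cast at h1 h2 ⊢
    refine mul_right_cancel₀ h3 ?_
    linear_combination (p + 2 * m + 1 : ℚ) * h2 - ih - (p + 1 : ℚ) * h1

lemma ext_even_odd {f g : PowerSeries ℚ}
    (h0 : ∀ m, PowerSeries.coeff (2 * m) f = PowerSeries.coeff (2 * m) g)
    (h1 : ∀ m, PowerSeries.coeff (2 * m + 1) f = PowerSeries.coeff (2 * m + 1) g) : f = g := by
  ext k
  obtain ⟨m, rfl | rfl⟩ := Nat.even_or_odd' k
  exacts [h0 m, h1 m]

lemma abs_besselCoeff_le (p m : ℕ) : |besselCoeff p m| ≤ 1 / ((2 * m).factorial : ℚ) := by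
  induction m with
  | zero => simp [besselCoeff]
  | succ m ih =>
    have h1 : besselCoeff p (m + 1) = -besselCoeff p m / ((2 * m + 2) * (p + 2 * m + 1)) := by
      rw [← besselCoeff_succ, mul_div_cancel_right₀]
      positivity
    have h2 : ((2 * (m + 1)).factorial : ℚ) = (2 * m).factorial * ((2 * m + 2) * (2 * m + 1)) := by
      rw [show 2 * (m + 1) = 2 * m + 1 + 1 by ring, Nat.factorial_succ, Nat.factorial_succ]
      push_cast
      ring
    rw [h1, h2, abs_div, abs_neg, ← div_div, abs_of_pos (a := (2 * (m : ℚ) + 2) * _) (by positivity)]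
    gcongr
    linarith [(Nat.cast_nonneg p : (0 : ℚ) ≤ p)]

lemma psSummable_besselPS (p : ℕ) (x : ℂ) : PSSummable x (besselPS p) := by
  refine Summable.of_nonneg_of_le (fun _ => norm_nonneg _) (fun k => ?_)
    (Real.summable_pow_div_factorial ‖x‖)
  have h : |PowerSeries.coeff k (besselPS p)| ≤ 1 / (k.factorial : ℚ) := by
    obtain ⟨m, rfl | rfl⟩ := Nat.even_or_odd' k
    · rw [coeff_besselPS_two_mul]
      exact abs_besselCoeff_le p m
    · rw [coeff_besselPS_odd, abs_zero]
      positivity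
  have h' : ‖((PowerSeries.coeff k (besselPS p) : ℚ) : ℂ)‖ ≤ 1 / (k.factorial : ℝ) := by
    rw [Complex.norm_ratCast]
    have h2 : ((|PowerSeries.coeff k (besselPS p)| : ℚ) : ℝ) ≤ ((1 / (k.factorial : ℚ) : ℚ) : ℝ) := by
      exact_mod_cast h
    simpa using h2
  rw [norm_mul, norm_pow, div_eq_mul_one_div, mul_comm]
  gcongr

lemma coeff_X_sq_mul_add_two {R : Type*} [CommRing R] (f : PowerSeries R) (k : ℕ) :
    PowerSeries.coeff (k + 2) (PowerSeries.X ^ 2 * f) = PowerSeries.coeff k f := by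
  rw [PowerSeries.coeff_X_pow_mul', if_pos (by omega), Nat.add_sub_cancel]

lemma coeff_X_sq_mul_of_lt {R : Type*} [CommRing R] (f : PowerSeries R) {k : ℕ} (hk : k < 2) :
    PowerSeries.coeff k (PowerSeries.X ^ 2 * f) = 0 := by
  rw [PowerSeries.coeff_X_pow_mul', if_neg (by omega)]

lemma eulerPS_besselPS (p : ℕ) : PowerSeries.C (p + 1 : ℚ) * eulerPS ℚ (besselPS p) =
    -(PowerSeries.X ^ 2 * besselPS (p + 2)) := by
  refine ext_even_odd (fun m => ?_) (fun m => ?_)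
  · rw [PowerSeries.coeff_C_mul, coeff_eulerPS, map_neg]
    cases m with
    | zero => simp [coeff_X_sq_mul_of_lt]
    | succ m =>
      rw [show 2 * (m + 1) = 2 * m + 2 by ring, coeff_X_sq_mul_add_two, coeff_besselPS_two_mul,
        show 2 * m + 2 = 2 * (m + 1) by ring, coeff_besselPS_two_mul]
      have h1 := besselCoeff_succ p m
      have h2 := besselCoeff_add_two p m
      have h3 : (p + 2 * m + 1 : ℚ) ≠ 0 := by positivity
      push_cast
      refine mul_right_cancel₀ h3 ?_
      linear_combination (p + 1 : ℚ) * h1 + h2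
  · rw [PowerSeries.coeff_C_mul, coeff_eulerPS, map_neg, coeff_besselPS_odd]
    cases m with
    | zero => simp [coeff_X_sq_mul_of_lt]
    | succ m =>
      rw [show 2 * (m + 1) + 1 = 2 * m + 1 + 2 by ring, coeff_X_sq_mul_add_two, coeff_besselPS_odd]
      simp

lemma besselPS_three_term (p : ℕ) : PowerSeries.X ^ 2 * besselPS (p + 4) =
    PowerSeries.C ((p + 1) * (p + 3) : ℚ) * (besselPS (p + 2) - besselPS p) := by
  refine ext_even_odd (fun m => ?_) (fun m => ?_)
  · rw [PowerSeries.coeff_C_mul, map_sub, coeff_besselPS_two_mul, coeff_besselPS_two_mul]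
    cases m with
    | zero => simp [coeff_X_sq_mul_of_lt, besselCoeff]
    | succ m =>
      rw [show 2 * (m + 1) = 2 * m + 2 by ring, coeff_X_sq_mul_add_two, coeff_besselPS_two_mul]
      have h1 := besselCoeff_succ p m
      have h2 := besselCoeff_add_two p (m + 1)
      have h3 := besselCoeff_add_two (p + 2) m
      have h4 := besselCoeff_add_two p m
      have h5 : ((p + 2 * m + 3) * (p + 2 * m + 1) : ℚ) ≠ 0 := by positivity
      push_cast at h1 h2 h3 h4 ⊢
      refine mul_right_cancel₀ h5 ?_
      rw [show p + 2 + 2 = p + 4 from rfl] at h3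
      linear_combination (p + 2 * m + 1 : ℚ) * h3 + (p + 3 : ℚ) * h4 -
        (p + 1) * (p + 3) * (p + 2 * m + 1) * h2 + (p + 3) * (p + 1) * h1
  · rw [PowerSeries.coeff_C_mul, map_sub, coeff_besselPS_odd, coeff_besselPS_odd]
    cases m with
    | zero => simp [coeff_X_sq_mul_of_lt]
    | succ m =>
      rw [show 2 * (m + 1) + 1 = 2 * m + 1 + 2 by ring, coeff_X_sq_mul_add_two, coeff_besselPS_odd]
      simp

lemma eulerPS_eulerPS_besselPS (p : ℕ) : eulerPS ℚ (eulerPS ℚ (besselPS (p + 1))) =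
    -(PowerSeries.C (p : ℚ) * eulerPS ℚ (besselPS (p + 1)) +
      PowerSeries.X ^ 2 * besselPS (p + 1)) := by
  refine ext_even_odd (fun m => ?_) (fun m => ?_)
  · rw [map_neg, map_add, PowerSeries.coeff_C_mul, coeff_eulerPS, coeff_eulerPS]
    cases m with
    | zero => simp [coeff_X_sq_mul_of_lt]
    | succ m =>
      rw [show 2 * (m + 1) = 2 * m + 2 by ring, coeff_X_sq_mul_add_two, coeff_besselPS_two_mul,
        show 2 * m + 2 = 2 * (m + 1) by ring, coeff_besselPS_two_mul]
      have h1 := besselCoeff_succ (p + 1) m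
      push_cast at h1 ⊢
      linear_combination h1
  · rw [map_neg, map_add, PowerSeries.coeff_C_mul, coeff_eulerPS, coeff_eulerPS, coeff_besselPS_odd]
    cases m with
    | zero => simp [coeff_X_sq_mul_of_lt]
    | succ m =>
      rw [show 2 * (m + 1) + 1 = 2 * m + 1 + 2 by ring, coeff_X_sq_mul_add_two, coeff_besselPS_odd]
      simp

lemma psEval_besselPS (p : ℕ) (x : ℂ) :
    psEval x (besselPS p) = ∑' m : ℕ, ((besselCoeff p m : ℚ) : ℂ) * x ^ (2 * m) := by
  unfold psEval
  rw [← (mul_right_injective₀ (two_ne_zero (α := ℕ))).tsum_eq]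
  · simp only [coeff_besselPS_two_mul]
  · intro k hk
    obtain ⟨m, rfl | rfl⟩ := Nat.even_or_odd' k
    · exact ⟨m, rfl⟩
    · simp [coeff_besselPS_odd] at hk

lemma psEval_ofReal (x : ℝ) (f : PowerSeries ℚ) :
    psEval x f = ((∑' k, ((PowerSeries.coeff k f : ℚ) : ℝ) * x ^ k : ℝ) : ℂ) := by
  rw [Complex.ofReal_tsum]
  exact tsum_congr fun k => by push_cast; rfl

/-- Term by term differentiation of a power series. -/
lemma hasDerivAt_psEval {f : PowerSeries ℚ} (hf : ∀ x, PSSummable x f) {z : ℂ} (hz : z ≠ 0) :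
    HasDerivAt (fun w => psEval w f) (psEval z (eulerPS ℚ f) / z) z := by
  set R : ℝ := ‖z‖ + 1
  have hR : 0 ≤ R := by positivity
  have hU : IsOpen (Metric.ball (0 : ℂ) R) := Metric.isOpen_ball
  have hzU : z ∈ Metric.ball (0 : ℂ) R := by simp [R]
  have hd : ∀ k : ℕ, DifferentiableOn ℂ
      (fun w : ℂ => ((PowerSeries.coeff k f : ℚ) : ℂ) * w ^ k) (Metric.ball (0 : ℂ) R) :=
    fun k => by fun_prop
  have hle : ∀ (k : ℕ) (w : ℂ), w ∈ Metric.ball (0 : ℂ) R →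
      ‖((PowerSeries.coeff k f : ℚ) : ℂ) * w ^ k‖ ≤
        ‖((PowerSeries.coeff k f : ℚ) : ℂ) * (R : ℂ) ^ k‖ := fun k w hw => by
    rw [norm_mul, norm_mul, norm_pow, norm_pow, Complex.norm_real, Real.norm_of_nonneg hR]
    have : ‖w‖ ≤ R := by simpa using (Metric.mem_ball.mp hw).le
    gcongr
  have h1 := (Complex.differentiableOn_tsum_of_summable_norm (hf R) hd hU hle).differentiableAt
    (hU.mem_nhds hzU)
  have h2 := (Complex.hasSum_deriv_of_summable_norm (hf R) hd hU hle hzU).tsum_eq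
  refine h1.hasDerivAt.congr_deriv ?_
  rw [← h2, eq_div_iff hz, psEval, ← tsum_mul_right]
  refine tsum_congr fun k => ?_
  rw [coeff_eulerPS, deriv_const_mul _ (by fun_prop), deriv_pow_field]
  cases k with
  | zero => simp
  | succ k =>
    push_cast
    ring

lemma Xi_eq {e ℓ : ℕ} {r : ℝ} (hr : 0 < r) :
    Xi (e + 2) ℓ r = ((2 : ℝ) ^ (ℓ + e / 2 : ℝ) * Real.Gamma (ℓ + e / 2 + 1))⁻¹ *
      (r ^ ℓ * ∑' m : ℕ, ((besselCoeff (2 * ℓ + e + 1) m : ℚ) : ℝ) * r ^ (2 * m)) := by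
  set ν : ℝ := ℓ + e / 2 with hν
  have hν0 : 0 ≤ ν := by positivity
  have hG : ∀ k : ℕ, 0 < Real.Gamma (k + ν + 1) := fun k => Real.Gamma_pos_of_pos (by positivity)
  have hcoeff : ∀ k : ℕ, (-1 : ℝ) ^ k / (k.factorial * Real.Gamma (k + ν + 1)) =
      4 ^ k * ((besselCoeff (2 * ℓ + e + 1) k : ℚ) : ℝ) / Real.Gamma (ν + 1) := by
    intro k
    induction k with
    | zero => simp [besselCoeff]
    | succ k ih =>
      have h1 := besselCoeff_succ (2 * ℓ + e + 1) k
      have h1' : ((besselCoeff (2 * ℓ + e + 1) (k + 1) : ℚ) : ℝ) *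
          (4 * ((k + 1) * (k + ν + 1))) = -((besselCoeff (2 * ℓ + e + 1) k : ℚ) : ℝ) := by
        have : ((besselCoeff (2 * ℓ + e + 1) (k + 1) : ℚ) : ℝ) * ((2 * k + 2) *
          ((2 * ℓ + e + 1) + 2 * k + 1)) = -((besselCoeff (2 * ℓ + e + 1) k : ℚ) : ℝ) := by
          exact_mod_cast h1
        rw [← this, hν]
        ring
      have h2 : Real.Gamma (((k + 1 : ℕ) : ℝ) + ν + 1) =
          (k + ν + 1) * Real.Gamma (k + ν + 1) := by
        rw [← Real.Gamma_add_one (by positivity)]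
        push_cast
        ring_nf
      have h3 : (k : ℝ) + 1 ≠ 0 := by positivity
      have h4 : (k : ℝ) + ν + 1 ≠ 0 := by positivity
      have h5 : (k.factorial : ℝ) ≠ 0 := by exact_mod_cast k.factorial_ne_zero
      have h6 := (hG k).ne'
      have h7 : Real.Gamma (ν + 1) ≠ 0 := by simpa using (hG 0).ne'
      rw [h2, Nat.factorial_succ, pow_succ, pow_succ]
      rw [div_eq_div_iff (by positivity) h7] at ih
      push_cast
      rw [div_eq_div_iff (by positivity) h7]
      linear_combination (-1 : ℝ) * ih - 4 ^ k * (k.factorial * Real.Gamma (k + ν + 1)) * h1'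
  have hterm : ∀ k : ℕ, (-1 : ℝ) ^ k / (k.factorial * Real.Gamma (k + ν + 1)) *
      (r / 2) ^ (2 * (k : ℝ) + ν) = (r / 2) ^ ν / Real.Gamma (ν + 1) *
        (((besselCoeff (2 * ℓ + e + 1) k : ℚ) : ℝ) * r ^ (2 * k)) := by
    intro k
    rw [hcoeff, Real.rpow_add (by positivity), show (2 * (k : ℝ)) = ((2 * k : ℕ) : ℝ) by push_cast; rfl,
      Real.rpow_natCast, div_pow, pow_mul (2 : ℝ) 2 k]
    norm_num
    field_simp
  have hpow : r ^ (-(e : ℝ) / 2) * (r / 2) ^ ν = r ^ ℓ / 2 ^ ν := by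
    rw [Real.div_rpow hr.le zero_le_two, ← mul_div_assoc, ← Real.rpow_add hr,
      ← Real.rpow_natCast r ℓ, hν]
    congr 2
    ring
  have hJ : besselJ (ℓ + ((e + 2 : ℕ) : ℝ) / 2 - 1) r = (r / 2) ^ ν / Real.Gamma (ν + 1) *
      ∑' m : ℕ, ((besselCoeff (2 * ℓ + e + 1) m : ℚ) : ℝ) * r ^ (2 * m) := by
    have : (ℓ : ℝ) + ((e + 2 : ℕ) : ℝ) / 2 - 1 = ν := by
      rw [hν]
      push_cast
      ring
    rw [this, besselJ, ← tsum_mul_left]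
    exact tsum_congr hterm
  rw [Xi, hJ, show ((2 : ℝ) - ((e + 2 : ℕ) : ℝ)) / 2 = -(e : ℝ) / 2 by push_cast; ring,
    mul_inv, ← mul_assoc, ← mul_div_assoc, hpow]
  ring

/-- At a positive zero of the derivative of `Xi`, the normalized Bessel function of order
`ℓ + d / 2 - 1` satisfies a linear first order relation. -/
lemma psEval_eulerPS_of_deriv_Xi_eq_zero {e ℓ : ℕ} {r : ℝ} (hr : 0 < r)
    (h : deriv (Xi (e + 2) ℓ) r = 0) :
    psEval r (eulerPS ℚ (besselPS (2 * ℓ + e + 1))) =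
      -(ℓ * psEval r (besselPS (2 * ℓ + e + 1))) := by
  set f := besselPS (2 * ℓ + e + 1) with hf
  set c : ℝ := ((2 : ℝ) ^ (ℓ + e / 2 : ℝ) * Real.Gamma (ℓ + e / 2 + 1))⁻¹
  have hc : c ≠ 0 := inv_ne_zero (mul_ne_zero (by positivity)
    (Real.Gamma_pos_of_pos (by positivity)).ne')
  have hr' : (r : ℂ) ≠ 0 := by exact_mod_cast hr.ne'
  have hXi : ∀ x : ℝ, 0 < x → Xi (e + 2) ℓ x = ((c : ℂ) * ((x : ℂ) ^ ℓ * psEval x f)).re := by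
    intro x hx
    rw [Xi_eq hx, hf, psEval_besselPS, ← Complex.ofReal_re (_ * _)]
    simp only [c]
    push_cast
    rfl
  have h1 : HasDerivAt (fun z : ℂ => (c : ℂ) * (z ^ ℓ * psEval z f))
      (c * (ℓ * (r : ℂ) ^ (ℓ - 1) * psEval r f + (r : ℂ) ^ ℓ * (psEval r (eulerPS ℚ f) / r))) r :=
    ((hasDerivAt_pow ℓ (r : ℂ)).mul (hasDerivAt_psEval (psSummable_besselPS _) hr')).const_mul _
  have h2 := h1.real_of_complex
  have h3 : deriv (Xi (e + 2) ℓ) r = _ := (h2.congr_of_eventuallyEq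
    ((eventually_gt_nhds hr).mono hXi)).deriv
  rw [h, psEval_ofReal r f, psEval_ofReal r (eulerPS ℚ f)] at h3
  rw [psEval_ofReal r f, psEval_ofReal r (eulerPS ℚ f)]
  norm_cast at h3 ⊢
  have h4 := (mul_eq_zero.mp h3.symm).resolve_left hc
  have hpow : (ℓ : ℝ) * r ^ (ℓ - 1) * r = ℓ * r ^ ℓ := by
    cases ℓ with
    | zero => simp
    | succ ℓ => rw [Nat.add_sub_cancel]; ring
  have h5 : r ^ ℓ ≠ 0 := by positivity
  refine mul_left_cancel₀ h5 ?_
  field_simp at h4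
  linear_combination h4 - (∑' k, ((PowerSeries.coeff k f : ℚ) : ℝ) * r ^ k) * hpow

end BesselSeries

section BesselValues

lemma psEval_C_mul (x : ℂ) (a : ℚ) (f : PowerSeries ℚ) :
    psEval x (PowerSeries.C a * f) = a * psEval x f := by
  unfold psEval
  rw [← tsum_mul_left]
  refine tsum_congr fun k => ?_
  rw [PowerSeries.coeff_C_mul]
  push_cast
  ring

lemma psEval_neg (x : ℂ) (f : PowerSeries ℚ) : psEval x (-f) = -psEval x f := by
  have := psEval_C_mul x (-1) f
  simpa using this

lemma PSSummable.neg {x : ℂ} {f : PowerSeries ℚ} (hf : PSSummable x f) : PSSummable x (-f) := by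
  unfold PSSummable at *
  simpa using hf

lemma psEval_sub {x : ℂ} {f g : PowerSeries ℚ} (hf : PSSummable x f) (hg : PSSummable x g) :
    psEval x (f - g) = psEval x f - psEval x g := by
  rw [sub_eq_add_neg, psEval_add hf hg.neg, psEval_neg, sub_eq_add_neg]

lemma intPolyToPS_X : intPolyToPS X = PowerSeries.X := by
  ext k
  rw [coeff_intPolyToPS, coeff_X, PowerSeries.coeff_X]
  simp [eq_comm]

lemma psEval_X_pow_mul {x : ℂ} {f : PowerSeries ℚ} (hf : PSSummable x f) (n : ℕ) :
    psEval x (PowerSeries.X ^ n * f) = x ^ n * psEval x f := by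
  rw [← intPolyToPS_X, ← map_pow, psEval_mul (psSummable_intPoly _ _) hf, psEval_intPoly]
  simp

lemma psEval_besselPS_three_term (p : ℕ) (x : ℂ) : x ^ 2 * psEval x (besselPS (p + 4)) =
    (p + 1) * (p + 3) * (psEval x (besselPS (p + 2)) - psEval x (besselPS p)) := by
  rw [← psEval_X_pow_mul (psSummable_besselPS _ _), besselPS_three_term, psEval_C_mul,
    psEval_sub (psSummable_besselPS _ _) (psSummable_besselPS _ _)]
  push_cast
  rfl

lemma psEval_eulerPS_besselPS (p : ℕ) (x : ℂ) :
    (p + 1) * psEval x (eulerPS ℚ (besselPS p)) = -(x ^ 2 * psEval x (besselPS (p + 2))) := by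
  rw [← psEval_X_pow_mul (psSummable_besselPS _ _), ← psEval_neg, ← eulerPS_besselPS, psEval_C_mul]
  push_cast
  rfl

lemma abs_besselCoeff_succ_le (p m : ℕ) : |besselCoeff p (m + 1)| ≤ 1 / ((p : ℚ) + 1) := by
  have h1 : besselCoeff p (m + 1) = -besselCoeff p m / ((2 * m + 2) * (p + 2 * m + 1)) := by
    rw [← besselCoeff_succ, mul_div_cancel_right₀]
    positivity
  have h2 : |besselCoeff p m| ≤ 1 := by
    refine (abs_besselCoeff_le p m).trans (div_le_one_of_le₀ ?_ (by positivity))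
    exact_mod_cast Nat.one_le_iff_ne_zero.mpr (Nat.factorial_ne_zero _)
  rw [h1, abs_div, abs_neg, abs_of_pos (a := (2 * (m : ℚ) + 2) * _) (by positivity)]
  gcongr
  nlinarith [(Nat.cast_nonneg p : (0 : ℚ) ≤ p), (Nat.cast_nonneg m : (0 : ℚ) ≤ m),
    mul_nonneg (Nat.cast_nonneg p : (0 : ℚ) ≤ p) (Nat.cast_nonneg m : (0 : ℚ) ≤ m)]

lemma tendsto_psEval_besselPS (p : ℕ) (x : ℂ) :
    Filter.Tendsto (fun j : ℕ => psEval x (besselPS (p + 2 * j))) Filter.atTop (nhds 1) := by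
  have hbound : ∀ q m : ℕ, ‖((besselCoeff q m : ℚ) : ℂ) * x ^ (2 * m)‖ ≤
      ‖x‖ ^ (2 * m) / (2 * m).factorial := fun q m => by
    have h : ‖((besselCoeff q m : ℚ) : ℂ)‖ ≤ 1 / ((2 * m).factorial : ℝ) := by
      have h2 : ((|besselCoeff q m| : ℚ) : ℝ) ≤ ((1 / ((2 * m).factorial : ℚ) : ℚ) : ℝ) := by
        exact_mod_cast abs_besselCoeff_le q m
      rw [Complex.norm_ratCast]
      simpa using h2
    rw [norm_mul, norm_pow, div_eq_mul_one_div, mul_comm]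
    gcongr
  have hlim : ∀ m : ℕ, Filter.Tendsto
      (fun j : ℕ => ((besselCoeff (p + 2 * j) m : ℚ) : ℂ) * x ^ (2 * m)) Filter.atTop
      (nhds (if m = 0 then 1 else 0)) := by
    intro m
    cases m with
    | zero => simp [besselCoeff]
    | succ m =>
      rw [if_neg (Nat.succ_ne_zero m), ← zero_mul (x ^ (2 * (m + 1)))]
      refine Filter.Tendsto.mul_const _ (squeeze_zero_norm (fun j => ?_)
        (tendsto_one_div_add_atTop_nhds_zero_nat (𝕜 := ℝ)))
      have h2 : ((|besselCoeff (p + 2 * j) (m + 1)| : ℚ) : ℝ) ≤ ((1 / ((j : ℚ) + 1) : ℚ) : ℝ) := by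
        refine Rat.cast_le.mpr ((abs_besselCoeff_succ_le (p + 2 * j) m).trans ?_)
        gcongr
        omega
      rw [Complex.norm_ratCast]
      simpa using h2
  have hsum : Summable fun m : ℕ => ‖x‖ ^ (2 * m) / ((2 * m).factorial : ℝ) :=
    (Real.summable_pow_div_factorial ‖x‖).comp_injective (mul_right_injective₀ two_ne_zero)
  have := tendsto_tsum_of_dominated_convergence hsum hlim
    (Filter.Eventually.of_forall fun j m => hbound (p + 2 * j) m)
  simpa only [psEval_besselPS, tsum_ite_eq] using this

/-- Two contiguous normalized Bessel functions do not vanish simultaneously. -/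
lemma psEval_besselPS_ne_zero {p : ℕ} {x : ℂ} (hx : x ≠ 0)
    (h : psEval x (besselPS p) = 0 → psEval x (besselPS (p + 2)) = 0) :
    psEval x (besselPS p) ≠ 0 := by
  intro h0
  have hall : ∀ j : ℕ, psEval x (besselPS (p + 2 * j)) = 0 ∧
      psEval x (besselPS (p + 2 * j + 2)) = 0 := by
    intro j
    induction j with
    | zero => exact ⟨h0, h h0⟩
    | succ j ih =>
      refine ⟨ih.2, ?_⟩
      have h3 := psEval_besselPS_three_term (p + 2 * j) x
      rw [ih.1, ih.2, sub_zero, mul_zero] at h3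
      exact (mul_eq_zero.mp h3).resolve_left (pow_ne_zero 2 hx)
  have hlim := tendsto_psEval_besselPS p x
  simp only [(hall _).1] at hlim
  exact zero_ne_one (tendsto_nhds_unique tendsto_const_nhds hlim)

lemma psEval_besselPS_zero (x : ℂ) : psEval x (besselPS 0) = Complex.cos x := by
  rw [psEval_besselPS, ← (Complex.hasSum_cos x).tsum_eq]
  refine tsum_congr fun m => ?_
  have h : besselCoeff 0 m = (-1) ^ m / ((2 * m).factorial : ℚ) := by
    rw [besselCoeff]
    congr 1
    induction m with
    | zero => simp
    | succ m ih =>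
      rw [Finset.prod_range_succ, ih, show 2 * (m + 1) = 2 * m + 1 + 1 by ring, Nat.factorial_succ,
        Nat.factorial_succ]
      push_cast
      ring
  rw [h]
  push_cast
  ring

lemma mul_psEval_besselPS_two (x : ℂ) : x * psEval x (besselPS 2) = Complex.sin x := by
  rw [psEval_besselPS, ← (Complex.hasSum_sin x).tsum_eq, ← tsum_mul_left]
  refine tsum_congr fun m => ?_
  have h : besselCoeff 2 m = (-1) ^ m / ((2 * m + 1).factorial : ℚ) := by
    rw [besselCoeff]
    congr 1
    induction m with
    | zero => simp
    | succ m ih =>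
      rw [Finset.prod_range_succ, ih, show 2 * (m + 1) + 1 = 2 * m + 1 + 1 + 1 by ring,
        Nat.factorial_succ (2 * m + 1 + 1), Nat.factorial_succ (2 * m + 1)]
      push_cast
      ring
  rw [h]
  push_cast
  ring

/-- Bessel functions of half-integral order are elementary. -/
lemma exists_psEval_besselPS_two_mul {r : ℝ} (hr : r ≠ 0) (halg : IsAlgebraic ℚ r) (n : ℕ) :
    ∃ a b a' b' : ℝ, (IsAlgebraic ℚ a ∧ IsAlgebraic ℚ b ∧ IsAlgebraic ℚ a' ∧ IsAlgebraic ℚ b') ∧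
      a * b' - a' * b ≠ 0 ∧
      psEval r (besselPS (2 * n)) = a * Complex.cos r + b * Complex.sin r ∧
      psEval r (besselPS (2 * n + 2)) = a' * Complex.cos r + b' * Complex.sin r := by
  have hr' : (r : ℂ) ≠ 0 := by exact_mod_cast hr
  induction n with
  | zero =>
    refine ⟨1, 0, 0, r⁻¹, ⟨isAlgebraic_one, isAlgebraic_zero, isAlgebraic_zero, halg.inv⟩,
      by simpa using hr, ?_, ?_⟩
    · simp [psEval_besselPS_zero]
    · rw [mul_zero, zero_add, ← mul_psEval_besselPS_two]
      push_cast
      field_simp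
      ring
  | succ n ih =>
    obtain ⟨a, b, a', b', ⟨ha, hb, ha', hb'⟩, hdet, h1, h2⟩ := ih
    have hc : IsAlgebraic ℚ (((2 * n + 1) * (2 * n + 3) : ℕ) * (r⁻¹) ^ 2 : ℝ) :=
      (isAlgebraic_natCast _).mul (halg.inv.pow 2)
    set c : ℝ := ((2 * n + 1) * (2 * n + 3) : ℕ) * (r⁻¹) ^ 2 with hcdef
    have hc0 : c ≠ 0 := by positivity
    refine ⟨a', b', c * (a' - a), c * (b' - b), ⟨ha', hb', hc.mul (ha'.sub ha),
      hc.mul (hb'.sub hb)⟩, ?_, h2, ?_⟩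
    · rw [show a' * (c * (b' - b)) - c * (a' - a) * b' = c * (a * b' - a' * b) by ring]
      exact mul_ne_zero hc0 hdet
    · have h3 := psEval_besselPS_three_term (2 * n) r
      rw [h1, h2] at h3
      rw [show 2 * (n + 1) + 2 = 2 * n + 4 by ring]
      refine mul_left_cancel₀ (pow_ne_zero 2 hr') (h3.trans ?_)
      rw [hcdef]
      push_cast
      field_simp
      ring

/-- A nontrivial linear relation with algebraic coefficients between the cosine and the sine of a
nonzero number forces this number to be transcendental. -/
lemma not_isAlgebraic_of_cos_sin_relation {r A B : ℝ} (hr : r ≠ 0) (hA : IsAlgebraic ℚ A)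
    (hB : IsAlgebraic ℚ B) (hAB : A ≠ 0 ∨ B ≠ 0)
    (h : A * Complex.cos r + B * Complex.sin r = 0) : ¬ IsAlgebraic ℚ r := by
  intro halg
  have hI : IsAlgebraic ℚ Complex.I := Complex.isIntegral_rat_I.isAlgebraic
  have hA' : IsAlgebraic ℚ (A : ℂ) := hA.algebraMap (A := ℂ)
  have hB' : IsAlgebraic ℚ (B : ℂ) := hB.algebraMap (A := ℂ)
  have hr' : IsAlgebraic ℚ (r : ℂ) := halg.algebraMap (A := ℂ)
  have hne : (A : ℂ) - B * Complex.I ≠ 0 := by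
    intro h0
    have hre := congr_arg Complex.re h0
    have him := congr_arg Complex.im h0
    simp at hre him
    tauto
  have hα : (r : ℂ) * Complex.I * 2 ≠ 0 := by simp [hr]
  refine transcendental_exp_of_isAlgebraic hα ((hr'.mul hI).mul (isAlgebraic_natCast 2)) ?_
  have hexp : Complex.exp ((r : ℂ) * Complex.I * 2) =
      -(A + B * Complex.I) * ((A : ℂ) - B * Complex.I)⁻¹ := by
    rw [eq_mul_inv_iff_mul_eq₀ hne]
    have h1 : Complex.exp ((r : ℂ) * Complex.I * 2) = Complex.exp (r * Complex.I) ^ 2 := by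
      rw [← Complex.exp_nat_mul]
      congr 1
      push_cast
      ring
    have h2 := Complex.exp_mul_I (r : ℂ)
    have h3 := Complex.sin_sq_add_cos_sq (r : ℂ)
    rw [h1, h2]
    linear_combination 2 * (Complex.cos r + Complex.sin r * Complex.I) * h -
      (A + B * Complex.I) * h3 + (A * Complex.sin r ^ 2 -
        2 * B * Complex.cos r * Complex.sin r - B * Complex.sin r ^ 2 * Complex.I) * Complex.I_sq
  rw [hexp]
  exact (hA'.add (hB'.mul hI)).neg.mul (hA'.sub (hB'.mul hI)).inv

end BesselValues

section SymmetricPower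

variable {S : Type*} [CommRing S]

/-- The derivation of a polynomial ring acting on coefficients. -/
noncomputable def coeffDerivation (d : RingDerivation S) : RingDerivation S[X] :=
  letI : Differential S := ⟨d⟩
  Differential.mapCoeffs

lemma coeff_coeffDerivation (d : RingDerivation S) (p : S[X]) (k : ℕ) :
    (coeffDerivation d p).coeff k = d (p.coeff k) := rfl

lemma coeffDerivation_C (d : RingDerivation S) (a : S) : coeffDerivation d (C a) = C (d a) := by
  ext k
  rw [coeff_coeffDerivation, coeff_C, coeff_C]
  split_ifs <;> simp

lemma coeffDerivation_X (d : RingDerivation S) : coeffDerivation d X = 0 := by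
  ext k
  rw [coeff_coeffDerivation, coeff_X]
  split_ifs <;> simp

/-- The operator on polynomials in `u` of degree at most `n` dual to the `n`-th symmetric power of
the linear differential equation whose Riccati equation is `d u = q - u ^ 2`. -/
noncomputable def symOp (d : RingDerivation S) (q : S) (n : ℕ) (p : S[X]) : S[X] :=
  coeffDerivation d p + (C q - X ^ 2) * derivative p + (n : S[X]) * X * p

lemma coeff_symOp_zero (d : RingDerivation S) (q : S) (n : ℕ) (p : S[X]) :
    (symOp d q n p).coeff 0 = d (p.coeff 0) + q * p.coeff 1 := by
  simp [symOp, coeff_coeffDerivation, sub_mul, coeff_derivative, mul_coeff_zero]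

lemma coeff_symOp_succ (d : RingDerivation S) (q : S) (n : ℕ) (p : S[X]) (a : ℕ) :
    (symOp d q n p).coeff (a + 1) =
      d (p.coeff (a + 1)) + (a + 2) * q * p.coeff (a + 2) + (n - a) * p.coeff a := by
  have h : (X ^ 2 * derivative p).coeff (a + 1) = a * p.coeff a := by
    rw [pow_two, mul_assoc, coeff_X_mul]
    cases a with
    | zero => simp
    | succ a =>
      rw [coeff_X_mul, coeff_derivative]
      push_cast
      ring
  rw [symOp, coeff_add, coeff_add, coeff_coeffDerivation, sub_mul, coeff_sub, coeff_C_mul, h,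
    mul_assoc, coeff_natCast_mul, coeff_X_mul, coeff_derivative]
  push_cast
  ring

lemma natDegree_symOp_le (d : RingDerivation S) (q : S) {n : ℕ} {p : S[X]}
    (hp : p.natDegree ≤ n) : (symOp d q n p).natDegree ≤ n := by
  rw [natDegree_le_iff_coeff_eq_zero] at hp ⊢
  intro a ha
  cases a with
  | zero => omega
  | succ a =>
    rw [coeff_symOp_succ, hp _ ha, hp _ (by omega : n < a + 2), map_zero]
    rcases (Nat.lt_succ_iff.mp ha).eq_or_lt with rfl | h
    · simp
    · simp [hp a h]

lemma symOp_C_mul (d : RingDerivation S) (q : S) (n : ℕ) (g : S) (p : S[X]) :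
    symOp d q n (C g * p) = C (d g) * p + C g * symOp d q n p := by
  simp only [symOp, Derivation.leibniz, coeffDerivation_C, derivative_mul, derivative_C,
    smul_eq_mul]
  ring

lemma symOp_add (d : RingDerivation S) (q : S) (n : ℕ) (p p' : S[X]) :
    symOp d q n (p + p') = symOp d q n p + symOp d q n p' := by
  simp only [symOp, map_add]
  ring

lemma map_symOp {S' : Type*} [CommRing S'] (ψ : S →+* S') {d : RingDerivation S}
    {d' : RingDerivation S'} (hψ : ∀ s, ψ (d s) = d' (ψ s)) (q : S) (n : ℕ) (p : S[X]) :
    (symOp d q n p).map ψ = symOp d' (ψ q) n (p.map ψ) := by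
  ext k
  cases k with
  | zero => simp [coeff_symOp_zero, hψ]
  | succ k =>
    simp only [coeff_map, coeff_symOp_succ, map_add, map_sub, map_mul, hψ, map_natCast]
    rw [map_ofNat ψ 2]

lemma taylor_derivative (u : S) (p : S[X]) :
    taylor u (derivative p) = derivative (taylor u p) := by
  rw [taylor_apply, taylor_apply, derivative_comp]
  simp

lemma taylor_coeffDerivation (d : RingDerivation S) (u : S) (p : S[X]) :
    taylor u (coeffDerivation d p) =
      coeffDerivation d (taylor u p) - C (d u) * derivative (taylor u p) := by
  induction p using Polynomial.induction_on' with
  | add p q hp hq =>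
    simp only [map_add, hp, hq]
    ring
  | monomial n a =>
    rw [← C_mul_X_pow_eq_monomial]
    simp only [Derivation.leibniz, Derivation.leibniz_pow, coeffDerivation_C, coeffDerivation_X,
      taylor_mul, taylor_C, taylor_pow, taylor_X, map_add, smul_zero, smul_eq_mul, zero_add,
      derivative_mul, derivative_C, derivative_pow, derivative_X, nsmul_eq_mul, add_zero, mul_zero,
      zero_mul, mul_one, map_natCast]
    ring

lemma taylor_symOp {d : RingDerivation S} {q u : S} (hu : d u = q - u ^ 2) (n : ℕ) (p : S[X]) :
    taylor u (symOp d q n p) = coeffDerivation d (taylor u p) -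
      (C (2 * u) * X + X ^ 2) * derivative (taylor u p) + (n : S[X]) * (X + C u) * taylor u p := by
  have hn : taylor u (n : S[X]) = n := by rw [← C_eq_natCast, taylor_C]
  simp only [symOp, map_add, taylor_mul, taylor_coeffDerivation, taylor_derivative, map_sub,
    taylor_C, taylor_pow, taylor_X, hu, hn, C_mul, C_pow, C_ofNat]
  ring

lemma coeff_taylor_symOp_zero {d : RingDerivation S} {q u : S} (hu : d u = q - u ^ 2) (n : ℕ)
    (p : S[X]) : (taylor u (symOp d q n p)).coeff 0 =
      d ((taylor u p).coeff 0) + n * u * (taylor u p).coeff 0 := by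
  rw [taylor_symOp hu]
  simp [coeff_coeffDerivation, mul_coeff_zero]

lemma coeff_taylor_symOp_succ {d : RingDerivation S} {q u : S} (hu : d u = q - u ^ 2) (n : ℕ)
    (p : S[X]) (a : ℕ) : (taylor u (symOp d q n p)).coeff (a + 1) =
      d ((taylor u p).coeff (a + 1)) + (n - 2 * (a + 1)) * u * (taylor u p).coeff (a + 1) +
        (n - a) * (taylor u p).coeff a := by
  set r := taylor u p with hr
  have h : (X ^ 2 * derivative r).coeff (a + 1) = a * r.coeff a := by
    rw [pow_two, mul_assoc, coeff_X_mul]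
    cases a with
    | zero => simp
    | succ a =>
      rw [coeff_X_mul, coeff_derivative]
      push_cast
      ring
  rw [taylor_symOp hu, ← hr, coeff_add, coeff_sub, coeff_coeffDerivation, add_mul, coeff_add, h,
    mul_assoc, coeff_C_mul, coeff_X_mul, coeff_derivative, mul_assoc (n : S[X]), coeff_natCast_mul,
    add_mul, coeff_add, coeff_X_mul, coeff_C_mul]
  ring

end SymmetricPower

section Independence

variable {L : Type*} [Field L]

/-- Iterating the symmetric power operator on a polynomial not vanishing at the Riccati solution
yields combinations of every order of vanishing. -/
lemma exists_symOp_combination {d : RingDerivation L} {q u : L} (hu : d u = q - u ^ 2)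
    (H : ∀ (t : L) (k : ℕ), 0 < k → d t ≠ 2 * u * t - k) {N : ℕ} {p : L[X]}
    (hp : p.eval u ≠ 0) {j : ℕ} (hj : j ≤ N) :
    ∃ w ∈ Submodule.span L ((fun i => (symOp d q N)^[i] p) '' Set.Iic j),
      (∀ a < j, (taylor u w).coeff a = 0) ∧ (taylor u w).coeff j = 1 := by
  induction j with
  | zero =>
    refine ⟨C (p.eval u)⁻¹ * p, ?_, by simp, ?_⟩
    · rw [← smul_eq_C_mul]
      exact Submodule.smul_mem _ _ (Submodule.subset_span ⟨0, by simp, rfl⟩)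
    · rw [taylor_mul, taylor_C, coeff_C_mul, taylor_coeff_zero, inv_mul_cancel₀ hp]
  | succ j ih =>
    obtain ⟨w, hw, hlt, hw1⟩ := ih (by omega)
    have hmono : Submodule.span L ((fun i => (symOp d q N)^[i] p) '' Set.Iic j) ≤
        Submodule.span L ((fun i => (symOp d q N)^[i] p) '' Set.Iic (j + 1)) :=
      Submodule.span_mono (Set.image_mono (Set.Iic_subset_Iic.mpr (by omega)))
    have hstep : symOp d q N w ∈
        Submodule.span L ((fun i => (symOp d q N)^[i] p) '' Set.Iic (j + 1)) := by
      clear hlt hw1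
      induction hw using Submodule.span_induction with
      | mem x hx =>
        obtain ⟨i, hi, rfl⟩ := hx
        exact Submodule.subset_span ⟨i + 1, by simpa using hi,
          Function.iterate_succ_apply' _ _ _⟩
      | zero =>
        have : symOp d q N (0 : L[X]) = 0 := by simp [symOp]
        rw [this]
        exact Submodule.zero_mem _
      | add x y _ _ hx hy =>
        rw [symOp_add]
        exact Submodule.add_mem _ hx hy
      | smul c x hx' hx =>
        rw [smul_eq_C_mul, symOp_C_mul, ← smul_eq_C_mul, ← smul_eq_C_mul]
        exact Submodule.add_mem _ (Submodule.smul_mem _ _ (hmono hx')) (Submodule.smul_mem _ _ hx)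
    set t := (taylor u w).coeff (j + 1) with ht
    set g : L := d t - 2 * u * t + (N - j : ℕ) with hg
    have hg0 : g ≠ 0 := by
      intro h
      refine H t (N - j) (by omega) ?_
      linear_combination h
    set w' : L[X] := symOp d q N w - C ((N - 2 * j) * u) * w with hw'
    have hNj : ((N - j : ℕ) : L) = N - j := by
      rw [Nat.cast_sub (by omega)]
    have hcoeff : (taylor u w').coeff (j + 1) = g := by
      rw [hw', map_sub, coeff_sub, coeff_taylor_symOp_succ hu, taylor_mul, taylor_C, coeff_C_mul,
        ← ht, hw1, hg, hNj]
      ring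
    have hlt' : ∀ a < j + 1, (taylor u w').coeff a = 0 := by
      intro a ha
      have hda : d ((taylor u w).coeff a) = 0 := by
        rcases (Nat.lt_succ_iff.mp ha).eq_or_lt with rfl | h
        · rw [hw1, Derivation.map_one_eq_zero]
        · rw [hlt a h, map_zero]
      rw [hw', map_sub, coeff_sub, taylor_mul, taylor_C, coeff_C_mul]
      cases a with
      | zero =>
        rw [coeff_taylor_symOp_zero hu, hda]
        rcases Nat.eq_zero_or_pos j with rfl | h
        · rw [hw1]
          simp
        · simp [hlt 0 h]
      | succ a =>
        rw [coeff_taylor_symOp_succ hu, hda, hlt a (by omega)]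
        rcases (Nat.lt_succ_iff.mp ha).eq_or_lt with rfl | h
        · rw [hw1]
          push_cast
          ring
        · simp [hlt _ h]
    refine ⟨C g⁻¹ * w', ?_, fun a ha => ?_, ?_⟩
    · rw [hw', ← smul_eq_C_mul, ← smul_eq_C_mul]
      exact Submodule.smul_mem _ _ (Submodule.sub_mem _ hstep
        (Submodule.smul_mem _ _ (hmono hw)))
    · rw [taylor_mul, taylor_C, coeff_C_mul, hlt' a ha, mul_zero]
    · rw [taylor_mul, taylor_C, coeff_C_mul, hcoeff, inv_mul_cancel₀ hg0]

lemma natDegree_symOp_iterate_le {S : Type*} [CommRing S] (d : RingDerivation S) (q : S) {n : ℕ}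
    {p : S[X]} (hp : p.natDegree ≤ n) (i : ℕ) : ((symOp d q n)^[i] p).natDegree ≤ n := by
  induction i with
  | zero => exact hp
  | succ i ih =>
    rw [Function.iterate_succ_apply']
    exact natDegree_symOp_le d q ih

lemma linearMap_eq_zero_of_symOp_iterate {d : RingDerivation L} {q u : L} (hu : d u = q - u ^ 2)
    (H : ∀ (t : L) (k : ℕ), 0 < k → d t ≠ 2 * u * t - k) {N : ℕ} {p : L[X]}
    (hpN : p.natDegree ≤ N) (hp : p.eval u ≠ 0) {f : L[X] →ₗ[L] L}
    (hf : ∀ i ≤ N, f ((symOp d q N)^[i] p) = 0) {r : L[X]} (hr : r.natDegree ≤ N) : f r = 0 := by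
  suffices h : ∀ m ≤ N + 1, ∀ r : L[X], r.natDegree ≤ N →
      (∀ a < N + 1 - m, (taylor u r).coeff a = 0) → f r = 0 from
    h (N + 1) le_rfl r hr (by simp)
  intro m
  induction m with
  | zero =>
    intro _ r hr h0
    have : taylor u r = 0 := by
      ext a
      rcases lt_or_ge a (N + 1) with h | h
      · simpa using h0 a h
      · rw [coeff_zero, coeff_eq_zero_of_natDegree_lt]
        rw [natDegree_taylor]
        omega
    rw [(taylor_eq_zero u r).mp this, map_zero]
  | succ m ih =>
    intro hm r hr h0
    obtain ⟨w, hw, hlt, hw1⟩ :=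
      exists_symOp_combination hu H hp (N := N) (j := N - m) (Nat.sub_le N m)
    have hw' : f w = 0 ∧ w.natDegree ≤ N := by
      have hle : Submodule.span L ((fun i => (symOp d q N)^[i] p) '' Set.Iic (N - m)) ≤
          LinearMap.ker f ⊓ degreeLE L N := by
        rw [Submodule.span_le]
        rintro _ ⟨i, hi, rfl⟩
        exact ⟨hf i ((Set.mem_Iic.mp hi).trans (by omega)), mem_degreeLE.mpr
          (natDegree_le_iff_degree_le.mp (natDegree_symOp_iterate_le d q hpN i))⟩
      have := hle hw
      exact ⟨this.1, natDegree_le_iff_degree_le.mpr (mem_degreeLE.mp this.2)⟩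
    set c := (taylor u r).coeff (N - m)
    have key := ih (by omega) (r - c • w)
      ((natDegree_sub_le _ _).trans (max_le hr ((natDegree_smul_le _ _).trans hw'.2)))
      fun a ha => by
        rw [map_sub, map_smul, coeff_sub, coeff_smul, smul_eq_mul]
        have ha' : a ≤ N - m := by omega
        rcases ha'.eq_or_lt with rfl | h
        · rw [hw1]
          simp [c]
        · have ha0 := h0 a (by omega)
          rw [hlt a h, ha0]
          simp
    rwa [map_sub, map_smul, hw'.1, smul_zero, sub_zero] at key

/-- The matrix of the linear system satisfied by the monomials `y ^ (N - i) * (d y) ^ i` when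
`d (d y) = q * y`. -/
noncomputable def symMatrix {S : Type*} [CommRing S] (q : S) (N : ℕ) :
    Matrix (Fin (N + 1)) (Fin (N + 1)) S :=
  Matrix.of fun i j => (if (j : ℕ) = i + 1 then ((N : S) - (i : ℕ)) else 0) +
    (if (i : ℕ) = j + 1 then ((i : ℕ) : S) * q else 0)

lemma ofFn_twist_symMatrix {S : Type*} [CommRing S] [DecidableEq S] (d : RingDerivation S) (q : S)
    (N : ℕ) (P : Fin (N + 1) → S) :
    ofFn (N + 1) (twist d (symMatrix q N) P) = symOp d q N (ofFn (N + 1) P) := by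
  have hP : ∀ i : Fin (N + 1), P i = (ofFn (N + 1) P).coeff i := fun i => by
    rw [ofFn_coeff_eq_val_of_lt P i.2]
  have hdeg : (ofFn (N + 1) P).natDegree ≤ N :=
    Nat.lt_succ_iff.mp (ofFn_natDegree_lt (by omega) P)
  ext a
  rcases lt_or_ge a (N + 1) with ha | ha
  · rw [ofFn_coeff_eq_val_of_lt _ ha]
    simp only [twist, symMatrix, Matrix.of_apply, hP]
    set p := ofFn (N + 1) P
    have hsum := Fin.sum_univ_eq_sum_range (fun i => p.coeff i *
      ((if a = i + 1 then ((N : S) - (i : ℕ)) else 0) + (if i = a + 1 then (i : S) * q else 0)))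
      (N + 1)
    rw [hsum]
    simp only [mul_add, mul_ite, mul_zero, Finset.sum_add_distrib, Finset.sum_ite_eq']
    have h2 : (if a + 1 ∈ Finset.range (N + 1) then
        p.coeff (a + 1) * (((a + 1 : ℕ) : S) * q) else 0) = (a + 1) * q * p.coeff (a + 1) := by
      split_ifs with h
      · push_cast
        ring
      · rw [coeff_eq_zero_of_natDegree_lt, mul_zero]
        simp only [Finset.mem_range] at h
        omega
    rw [h2]
    cases a with
    | zero => simp [coeff_symOp_zero]
    | succ a =>
      simp only [Nat.succ_inj]
      rw [coeff_symOp_succ, Finset.sum_ite_eq, if_pos (by simp; omega)]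
      push_cast
      ring
  · rw [ofFn_coeff_eq_zero_of_ge _ ha, coeff_eq_zero_of_natDegree_lt]
    exact (natDegree_symOp_le d q hdeg).trans_lt ha

lemma det_twist_symMatrix_ne_zero [DecidableEq L] {d : RingDerivation L} {q u : L}
    (hu : d u = q - u ^ 2)
    (H : ∀ (t : L) (k : ℕ), 0 < k → d t ≠ 2 * u * t - k) {N : ℕ} {P : Fin (N + 1) → L}
    (hP : (ofFn (N + 1) P).eval u ≠ 0) :
    (Matrix.of fun i j : Fin (N + 1) => (twist d (symMatrix q N))^[(i : ℕ)] P j).det ≠ 0 := by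
  intro hdet
  obtain ⟨v, hv0, hv⟩ := Matrix.exists_mulVec_eq_zero_iff.mpr hdet
  let f : L[X] →ₗ[L] L := ∑ j : Fin (N + 1), v j • lcoeff L j
  have hf : ∀ r : L[X], f r = ∑ j : Fin (N + 1), v j * r.coeff j := fun r => by simp [f]
  have hiter : ∀ i, ofFn (N + 1) ((twist d (symMatrix q N))^[i] P) =
      (symOp d q N)^[i] (ofFn (N + 1) P) := by
    intro i
    induction i with
    | zero => rfl
    | succ i ih => rw [Function.iterate_succ_apply', Function.iterate_succ_apply',
        ofFn_twist_symMatrix, ih]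
  have hzero : ∀ i ≤ N, f ((symOp d q N)^[i] (ofFn (N + 1) P)) = 0 := by
    intro i hi
    have := congr_fun hv ⟨i, by omega⟩
    rw [← hiter, hf, ← this.trans (Pi.zero_apply _)]
    simp only [Matrix.mulVec, dotProduct, Matrix.of_apply]
    refine Finset.sum_congr rfl fun j _ => ?_
    rw [ofFn_coeff_eq_val_of_lt _ j.2, mul_comm]
  refine hv0 (funext fun j => ?_)
  have := linearMap_eq_zero_of_symOp_iterate hu H
    (Nat.lt_succ_iff.mp (ofFn_natDegree_lt (by omega) P)) hP hzero (r := X ^ (j : ℕ))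
    ((natDegree_X_pow_le _).trans (Nat.lt_succ_iff.mp j.2))
  rw [hf, Finset.sum_eq_single j (fun i _ hij => by
    rw [coeff_X_pow, if_neg (fun h => hij (Fin.ext h)), mul_zero]) (by simp)] at this
  simpa using this

end Independence

section RiccatiTranscendence

/-- An irrational solution of a Riccati equation `d u = q - u ^ 2` is transcendental over the base
as soon as the associated linear equation has no further solution in the same field. -/
lemma eval₂_ne_zero_of_riccati {S L : Type*} [CommRing S] [IsDomain S] [CharZero S] [Field L]
    {ψ : S →+* L} (hinj : Function.Injective ψ) {d : RingDerivation S} {d' : RingDerivation L}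
    (hψ : ∀ s, ψ (d s) = d' (ψ s)) {q : S} {u : L} (hu : d' u = ψ q - u ^ 2)
    (H : ∀ (t : L) (k : ℕ), 0 < k → d' t ≠ 2 * u * t - k)
    (hrat : ∀ a b : S, b ≠ 0 → ψ a ≠ u * ψ b) {P : S[X]} (hP : P ≠ 0) : P.eval₂ ψ u ≠ 0 := by
  induction hn : P.natDegree using Nat.strong_induction_on generalizing P with
  | _ n ih =>
    intro h0
    have hlc : P.leadingCoeff ≠ 0 := leadingCoeff_ne_zero.mpr hP
    have hn0 : n ≠ 0 := by
      rintro rfl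
      rw [eq_C_of_natDegree_eq_zero hn, eval₂_C, map_eq_zero_iff ψ hinj] at h0
      rw [leadingCoeff, hn] at hlc
      exact hlc h0
    set p := P.map ψ with hp
    have hpu : (taylor u p).coeff 0 = 0 := by rw [taylor_coeff_zero, hp, eval_map, h0]
    set e := (symOp d q n P).coeff n
    have hdeg : (symOp d q n P).natDegree ≤ n := natDegree_symOp_le d q hn.le
    set Q := C P.leadingCoeff * symOp d q n P - C e * P with hQ
    have hQ0 : Q = 0 := by
      by_contra hQ0
      have hQn : Q.natDegree ≤ n := (natDegree_sub_le _ _).trans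
        (max_le ((natDegree_C_mul_le _ _).trans hdeg) ((natDegree_C_mul_le _ _).trans hn.le))
      have hQc : Q.coeff n = 0 := by
        rw [hQ, coeff_sub, coeff_C_mul, coeff_C_mul, leadingCoeff, hn]
        exact sub_eq_zero.mpr (mul_comm _ _)
      have hQlt : Q.natDegree < n := by
        refine lt_of_le_of_ne hQn fun h => hQ0 (leadingCoeff_eq_zero.mp ?_)
        rw [leadingCoeff, h, hQc]
      refine ih _ hQlt hQ0 rfl ?_
      rw [hQ, eval₂_sub, eval₂_mul, eval₂_mul, h0, mul_zero, sub_zero, ← eval_map (p := symOp d q n P),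
        map_symOp ψ hψ, ← hp, ← taylor_coeff_zero, coeff_taylor_symOp_zero hu, hpu]
      simp
    set c := ψ P.leadingCoeff with hc
    have hc0 : c ≠ 0 := (map_ne_zero_iff ψ hinj).mpr hlc
    have hcoeff : ∀ a, c * (taylor u (symOp d' (ψ q) n p)).coeff a =
        ψ e * (taylor u p).coeff a := by
      intro a
      have := congr_arg (fun r : S[X] => (taylor u (r.map ψ)).coeff a) (sub_eq_zero.mp hQ0)
      simpa only [Polynomial.map_mul, map_C, map_symOp ψ hψ, taylor_mul, taylor_C,
        coeff_C_mul] using this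
    have hp0 : p ≠ 0 := (Polynomial.map_ne_zero_iff hinj).mpr hP
    have hpn : p.natDegree = n := by rw [hp, natDegree_map_eq_of_injective hinj, hn]
    set t := taylor u p with ht
    have ht0 : t ≠ 0 := fun h => hp0 ((taylor_eq_zero u p).mp h)
    have htn : t.natDegree = n := by rw [ht, natDegree_taylor, hpn]
    by_cases hlow : ∀ a < n, t.coeff a = 0
    · have htX : t = C (t.coeff n) * X ^ n := by
        ext a
        rw [coeff_C_mul, coeff_X_pow]
        rcases lt_trichotomy a n with h | rfl | h
        · rw [hlow a h, if_neg h.ne, mul_zero]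
        · simp
        · rw [coeff_eq_zero_of_natDegree_lt (by omega), if_neg h.ne', mul_zero]
      have hpX : p = C (t.coeff n) * (X - C u) ^ n := by
        have h1 : taylor u (C (t.coeff n) * (X - C u) ^ n) = t := by
          rw [taylor_mul, taylor_C, taylor_pow, map_sub, taylor_X, taylor_C, add_sub_cancel_right,
            ← htX]
        exact taylor_injective u (h1.symm ▸ ht.symm)
      have h1 : p.coeff n = t.coeff n := by
        rw [hpX, coeff_C_mul, sub_eq_add_neg, ← C_neg, coeff_X_add_C_pow]
        simp
      have h2 : p.coeff (n - 1) = t.coeff n * (-u * n) := by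
        conv_lhs => rw [hpX]
        rw [coeff_C_mul, sub_eq_add_neg, ← C_neg, coeff_X_add_C_pow, Nat.sub_sub_self (by omega), pow_one,
          Nat.choose_symm (by omega), Nat.choose_one_right]
      rw [← h1, hp, coeff_map, coeff_map] at h2
      refine hrat (-P.coeff (n - 1)) (n * P.coeff n)
        (mul_ne_zero (by exact_mod_cast hn0) (hn ▸ hlc)) ?_
      rw [map_neg, map_mul, map_natCast, h2]
      ring
    · push Not at hlow
      classical
      let j := Nat.find hlow
      obtain ⟨hjn, hj0⟩ : j < n ∧ t.coeff j ≠ 0 := Nat.find_spec hlow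
      have hjmin : ∀ a < j, t.coeff a = 0 := by
        intro a ha
        have := Nat.find_min hlow ha
        push Not at this
        exact this (ha.trans hjn)
      have e1 : c * (d' (t.coeff j) + (n - 2 * j) * u * t.coeff j) = ψ e * t.coeff j := by
        rw [← hcoeff]
        congr 1
        rcases hj : j with _ | k
        · rw [coeff_taylor_symOp_zero hu]
          simp only [Nat.cast_zero, mul_zero, sub_zero]
          rw [← ht]
        · rw [coeff_taylor_symOp_succ hu, ← ht, hjmin k (by omega)]
          push_cast
          ring
      have e2 : c * (d' (t.coeff (j + 1)) + (n - 2 * (j + 1)) * u * t.coeff (j + 1) +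
          (n - j) * t.coeff j) = ψ e * t.coeff (j + 1) := by
        rw [← hcoeff, coeff_taylor_symOp_succ hu]
      set g := t.coeff (j + 1) / t.coeff j with hg
      have hg' : t.coeff (j + 1) = t.coeff j * g := by rw [hg, mul_div_cancel₀ _ hj0]
      refine H g (n - j) (by omega) ?_
      rw [Nat.cast_sub hjn.le]
      rw [hg', Derivation.leibniz, smul_eq_mul, smul_eq_mul] at e2
      refine mul_left_cancel₀ (mul_ne_zero hc0 hj0) ?_
      linear_combination e2 - g * e1

/-- The Riccati equation attached to Bessel's equation has no rational solution. -/
lemma not_rational_riccati_bessel {L : Type*} [Field L] {ψ : ℤ[X] →+* L}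
    (hinj : Function.Injective ψ) {d' : RingDerivation L}
    (hψ : ∀ s, ψ (eulerPoly ℤ s) = d' (ψ s)) {ν : ℤ} {u : L}
    (hu : d' u = ψ (C (ν ^ 2) - X ^ 2) - u ^ 2) (a b : ℤ[X]) (hb : b ≠ 0) : ψ a ≠ u * ψ b := by
  intro h
  have hpoly : a ^ 2 + (X * b) ^ 2 =
      C (ν ^ 2) * b ^ 2 + a * eulerPoly ℤ b - b * eulerPoly ℤ a := by
    apply hinj
    have h1 := congr_arg d' h
    rw [Derivation.leibniz, smul_eq_mul, smul_eq_mul, hu, ← hψ, ← hψ] at h1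
    simp only [map_add, map_sub, map_mul, map_pow] at h1 ⊢
    linear_combination ψ b * h1 + (ψ a + u * ψ b - ψ (eulerPoly ℤ b)) * h
  set m := max a.natDegree (b.natDegree + 1) with hm
  have ha : a.natDegree ≤ m := le_max_left _ _
  have hb' : b.natDegree ≤ m - 1 := by omega
  have hm1 : 1 ≤ m := by omega
  have hXb : (X * b).natDegree ≤ m := (natDegree_X_mul hb).le.trans (by omega)
  have hc := congr_arg (fun p : ℤ[X] => p.coeff (2 * m)) hpoly
  have hR : (C (ν ^ 2) * b ^ 2 + a * eulerPoly ℤ b - b * eulerPoly ℤ a).natDegree < 2 * m := by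
    have h1 : (C (ν ^ 2) * b ^ 2).natDegree ≤ 2 * m - 1 :=
      (natDegree_C_mul_le _ _).trans (natDegree_pow_le.trans (by omega))
    have h2 : (a * eulerPoly ℤ b).natDegree ≤ 2 * m - 1 :=
      natDegree_mul_le.trans (by have := natDegree_eulerPoly_le b; omega)
    have h3 : (b * eulerPoly ℤ a).natDegree ≤ 2 * m - 1 :=
      natDegree_mul_le.trans (by have := natDegree_eulerPoly_le a; omega)
    have := (natDegree_sub_le _ _).trans (max_le ((natDegree_add_le _ _).trans (max_le h1 h2)) h3)
    omega
  simp only [coeff_add (a ^ 2)] at hc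
  rw [coeff_eq_zero_of_natDegree_lt hR, coeff_pow_of_natDegree_le ha,
    coeff_pow_of_natDegree_le hXb] at hc
  have h1 : a.coeff m = 0 := by nlinarith [sq_nonneg (a.coeff m), sq_nonneg ((X * b).coeff m)]
  have h2 : (X * b).coeff m = 0 := by
    nlinarith [sq_nonneg (a.coeff m), sq_nonneg ((X * b).coeff m)]
  rcases max_choice a.natDegree (b.natDegree + 1) with h | h
  · have : a.leadingCoeff = 0 := by rw [leadingCoeff, ← h, ← hm, h1]
    rw [← hm, leadingCoeff_eq_zero.mp this, natDegree_zero] at h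
    omega
  · rw [← hm] at h
    rw [h, coeff_X_mul] at h2
    exact hb (leadingCoeff_eq_zero.mp h2)

end RiccatiTranscendence

lemma RingDerivation.map_mul {S : Type*} [CommRing S] (d : RingDerivation S) (a b : S) :
    d (a * b) = a * d b + b * d a :=
  d.leibniz a b

lemma RingDerivation.map_natCast {S : Type*} [CommRing S] (d : RingDerivation S) (n : ℕ) :
    d n = 0 :=
  Derivation.map_natCast d n

section LaurentSeries

/-- The Euler derivation `X * d/dX` on rational Laurent series. -/
noncomputable def eulerLaurent : RingDerivation (LaurentSeries ℚ) :=
  RingDerivation.mk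
    { toFun := fun f =>
        { coeff := fun k => (k : ℚ) * f.coeff k
          isPWO_support' := f.isPWO_support.mono fun k hk h => hk (by simp [h]) }
      map_zero' := by ext k; simp
      map_add' := fun f g => by ext k; simp [mul_add] }
    fun f g => by
      have hsub : ∀ h : LaurentSeries ℚ, (HahnSeries.mk (fun k => (k : ℚ) * h.coeff k)
          (h.isPWO_support.mono fun k hk h' => hk (by simp [h'])) : LaurentSeries ℚ).support ⊆
          h.support := fun h k hk h' => hk (by simp [h'])
      ext k
      rw [mul_comm g]
      simp only [AddMonoidHom.coe_mk, ZeroHom.coe_mk, HahnSeries.coeff_add]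
      rw [HahnSeries.coeff_mul_left' f.isPWO_support (hsub f),
        HahnSeries.coeff_mul_right' g.isPWO_support (hsub g), HahnSeries.coeff_mul,
        ← Finset.sum_add_distrib, Finset.mul_sum]
      refine Finset.sum_congr rfl fun ij hij => ?_
      have : k = ij.1 + ij.2 := (Finset.mem_antidiagonal.mp hij).2.2.symm
      rw [this]
      push_cast
      ring

lemma coeff_eulerLaurent (f : LaurentSeries ℚ) (k : ℤ) :
    (eulerLaurent f).coeff k = k * f.coeff k := rfl

lemma ofPowerSeries_eulerPS (f : PowerSeries ℚ) :
    HahnSeries.ofPowerSeries ℤ ℚ (eulerPS ℚ f) = eulerLaurent (HahnSeries.ofPowerSeries ℤ ℚ f) := by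
  ext k
  rw [coeff_eulerLaurent, PowerSeries.coeff_coe, PowerSeries.coeff_coe]
  split_ifs with h
  · rw [mul_zero]
  · obtain ⟨n, rfl⟩ := Int.eq_ofNat_of_zero_le (not_lt.mp h)
    rw [Int.natAbs_natCast, coeff_eulerPS, Int.cast_natCast]

/-- Integer polynomials as rational Laurent series. -/
noncomputable def intPolyToLaurent : ℤ[X] →+* LaurentSeries ℚ :=
  (HahnSeries.ofPowerSeries ℤ ℚ).comp intPolyToPS

lemma intPolyToLaurent_injective : Function.Injective intPolyToLaurent := by
  refine HahnSeries.ofPowerSeries_injective.comp fun a b h => ?_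
  ext k
  have := congr_arg (PowerSeries.coeff k) h
  rw [coeff_intPolyToPS, coeff_intPolyToPS] at this
  exact_mod_cast this

lemma intPolyToLaurent_euler (p : ℤ[X]) :
    intPolyToLaurent (eulerPoly ℤ p) = eulerLaurent (intPolyToLaurent p) := by
  rw [intPolyToLaurent, RingHom.comp_apply, intPolyToPS_euler, ofPowerSeries_eulerPS]
  rfl

lemma coeff_besselOperator_mul (ν : ℕ) (g : LaurentSeries ℚ) (k : ℤ) :
    (intPolyToLaurent (C ((ν : ℤ) ^ 2) - X ^ 2) * g).coeff k =
      (ν : ℚ) ^ 2 * g.coeff k - g.coeff (k - 2) := by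
  have h1 : intPolyToLaurent (C ((ν : ℤ) ^ 2)) = HahnSeries.C ((ν : ℚ) ^ 2) := by
    rw [map_pow, map_pow, map_pow]
    simp
  have h2 : intPolyToLaurent (X ^ 2) = HahnSeries.single (2 : ℤ) (1 : ℚ) := by
    rw [intPolyToLaurent, RingHom.comp_apply, map_pow, intPolyToPS_X,
      HahnSeries.ofPowerSeries_X_pow]
    simp
  rw [map_sub, h1, h2, sub_mul, HahnSeries.coeff_sub, HahnSeries.C_mul_eq_smul,
    HahnSeries.coeff_smul, smul_eq_mul, HahnSeries.coeff_single_mul, one_mul]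

/-- A Laurent series solution of Bessel's equation of order `ν` is determined by its coefficient
of index `ν`. -/
lemma eq_zero_of_bessel_equation {ν : ℕ} {g : LaurentSeries ℚ}
    (hg : eulerLaurent (eulerLaurent g) = intPolyToLaurent (C ((ν : ℤ) ^ 2) - X ^ 2) * g)
    (h0 : g.coeff ν = 0) : g = 0 := by
  have hrec : ∀ k : ℤ, ((k : ℚ) ^ 2 - (ν : ℚ) ^ 2) * g.coeff k = -g.coeff (k - 2) := by
    intro k
    have := congr_arg (fun f : LaurentSeries ℚ => f.coeff k) hg
    simp only [coeff_eulerLaurent, coeff_besselOperator_mul] at this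
    linear_combination this
  by_contra hne
  have hm : g.coeff g.order ≠ 0 := fun h => hne (HahnSeries.coeff_order_eq_zero.mp h)
  have hsq := hrec g.order
  rw [HahnSeries.coeff_eq_zero_of_lt_order (show g.order - 2 < g.order by omega), neg_zero,
    mul_eq_zero, or_iff_left hm, sub_eq_zero, sq_eq_sq_iff_eq_or_eq_neg] at hsq
  have hdown : ∀ j : ℕ, g.coeff (ν - 2 * j) = 0 := by
    intro j
    induction j with
    | zero => simpa using h0
    | succ j ih =>
      have := hrec (ν - 2 * j)
      rw [ih, mul_zero, eq_comm, neg_eq_zero] at this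
      rw [← this]
      congr 1
      push_cast
      ring
  rcases hsq with h | h
  · exact hm ((show g.order = ν by exact_mod_cast h) ▸ h0)
  · refine hm ?_
    rw [← hdown ν]
    congr 1
    have : g.order = -(ν : ℤ) := by exact_mod_cast h
    omega

end LaurentSeries

section BesselJ

/-- A multiple of the power series of the Bessel function of integer order `ν`. -/
noncomputable def besselJPS (ν : ℕ) : PowerSeries ℚ :=
  PowerSeries.X ^ ν * besselPS (2 * ν + 1)

lemma eulerPS_X_pow (n : ℕ) : eulerPS ℚ (PowerSeries.X ^ n) = (n : PowerSeries ℚ) * PowerSeries.X ^ n := by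
  ext k
  rw [coeff_eulerPS, ← map_natCast (PowerSeries.C : ℚ →+* PowerSeries ℚ), PowerSeries.coeff_C_mul,
    PowerSeries.coeff_X_pow]
  split_ifs with h
  · rw [h]
  · simp

lemma eulerPS_besselJPS (ν : ℕ) : eulerPS ℚ (besselJPS ν) =
    (ν : PowerSeries ℚ) * besselJPS ν + PowerSeries.X ^ ν * eulerPS ℚ (besselPS (2 * ν + 1)) := by
  rw [besselJPS, RingDerivation.map_mul, eulerPS_X_pow]
  ring

lemma intPolyToPS_besselOperator (ν : ℕ) : intPolyToPS (C ((ν : ℤ) ^ 2) - X ^ 2) =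
    (ν : PowerSeries ℚ) ^ 2 - PowerSeries.X ^ 2 := by
  rw [map_sub, map_pow, map_pow, map_pow, intPolyToPS_X]
  simp

lemma eulerPS_eulerPS_besselJPS (ν : ℕ) : eulerPS ℚ (eulerPS ℚ (besselJPS ν)) =
    intPolyToPS (C ((ν : ℤ) ^ 2) - X ^ 2) * besselJPS ν := by
  have h := eulerPS_eulerPS_besselPS (2 * ν)
  rw [map_natCast] at h
  rw [intPolyToPS_besselOperator, eulerPS_besselJPS, map_add, RingDerivation.map_mul,
    RingDerivation.map_mul, RingDerivation.map_natCast, eulerPS_besselJPS, eulerPS_X_pow, h, besselJPS]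
  push_cast
  ring

lemma coeff_besselJPS_self (ν : ℕ) : PowerSeries.coeff ν (besselJPS ν) = 1 := by
  rw [besselJPS, PowerSeries.coeff_X_pow_mul', if_pos le_rfl, Nat.sub_self,
    ← mul_zero 2, coeff_besselPS_two_mul]
  simp [besselCoeff]

lemma besselJPS_ne_zero (ν : ℕ) : besselJPS ν ≠ 0 := by
  intro h
  have := coeff_besselJPS_self ν
  simp [h] at this

/-- Derivatives of a nonzero integer combination of the monomials in a Bessel function and its
derivative are linearly independent. -/
lemma det_twist_besselMatrix_ne_zero (ν N : ℕ) {P : Fin (N + 1) → ℤ[X]} (hP : P ≠ 0) :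
    (Matrix.of fun i j : Fin (N + 1) =>
      (twist (eulerPoly ℤ) (symMatrix (C ((ν : ℤ) ^ 2) - X ^ 2) N))^[(i : ℕ)] P j).det ≠ 0 := by
  classical
  set q : ℤ[X] := C ((ν : ℤ) ^ 2) - X ^ 2 with hq
  set ψ := intPolyToLaurent with hψ
  set J : LaurentSeries ℚ := HahnSeries.ofPowerSeries ℤ ℚ (besselJPS ν) with hJ
  have hJ0 : J ≠ 0 := by
    rw [hJ, map_ne_zero_iff _ HahnSeries.ofPowerSeries_injective]
    exact besselJPS_ne_zero ν
  have hJν : J.coeff ν = 1 := by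
    rw [hJ, HahnSeries.ofPowerSeries_apply_coeff, coeff_besselJPS_self]
  have hDJ : eulerLaurent (eulerLaurent J) = ψ q * J := by
    rw [hJ, ← ofPowerSeries_eulerPS, ← ofPowerSeries_eulerPS, eulerPS_eulerPS_besselJPS, map_mul]
    rfl
  set u := eulerLaurent J / J with hu
  have huJ : eulerLaurent J = u * J := by rw [hu, div_mul_cancel₀ _ hJ0]
  have hDu : eulerLaurent u = ψ q - u ^ 2 := by
    have h := congr_arg eulerLaurent huJ
    rw [hDJ, RingDerivation.map_mul, huJ] at h
    refine mul_right_cancel₀ hJ0 ?_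
    linear_combination -h
  have H : ∀ (t : LaurentSeries ℚ) (k : ℕ), 0 < k → eulerLaurent t ≠ 2 * u * t - k := by
    intro t k hk ht
    set g := t / J with hg
    have htJ : t = g * J := by rw [hg, div_mul_cancel₀ _ hJ0]
    have hDg : J * eulerLaurent g = u * g * J - k := by
      rw [htJ, RingDerivation.map_mul, huJ] at ht
      linear_combination ht
    have hDDg : eulerLaurent (eulerLaurent g) = ψ q * g := by
      have h := congr_arg eulerLaurent hDg
      simp only [RingDerivation.map_mul, map_sub, RingDerivation.map_natCast, huJ, hDu] at h
      refine mul_right_cancel₀ hJ0 ?_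
      linear_combination h
    have hC : eulerLaurent (HahnSeries.C (g.coeff ν)) = 0 := by
      ext i
      rw [coeff_eulerLaurent, HahnSeries.C_apply, HahnSeries.coeff_single]
      split_ifs with h <;> simp [h]
    have hgJ : g - HahnSeries.C (g.coeff ν) * J = 0 := by
      refine eq_zero_of_bessel_equation (ν := ν) ?_ ?_
      · simp only [map_sub, RingDerivation.map_mul, hC, hDDg, hDJ, mul_zero, add_zero]
        rw [← map_sub]
        ring
      · rw [HahnSeries.coeff_sub, HahnSeries.C_mul_eq_smul, HahnSeries.coeff_smul, hJν]
        simp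
    have hDg' := congr_arg eulerLaurent (sub_eq_zero.mp hgJ)
    rw [RingDerivation.map_mul, hC, mul_zero, add_zero, huJ] at hDg'
    have hk0 : (k : LaurentSeries ℚ) = 0 := by
      rw [hDg'] at hDg
      linear_combination hDg + u * J * hgJ
    rw [← map_natCast (HahnSeries.C : ℚ →+* LaurentSeries ℚ),
      map_eq_zero_iff _ HahnSeries.C_injective] at hk0
    exact hk.ne' (Nat.cast_eq_zero.mp hk0)
  have hmap : (symMatrix q N).map ψ = symMatrix (ψ q) N := by
    ext i j
    simp only [symMatrix, Matrix.map_apply, Matrix.of_apply]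
    split_ifs <;> simp
  intro hdet
  have hev : (ofFn (N + 1) (ψ ∘ P)).eval u ≠ 0 := by
    have h1 : ofFn (N + 1) (ψ ∘ P) = (ofFn (N + 1) P).map ψ := by
      ext k
      rw [coeff_map]
      rcases lt_or_ge k (N + 1) with h | h
      · rw [ofFn_coeff_eq_val_of_lt _ h, ofFn_coeff_eq_val_of_lt _ h]; rfl
      · rw [ofFn_coeff_eq_zero_of_ge _ h, ofFn_coeff_eq_zero_of_ge _ h, map_zero]
    rw [h1, eval_map]
    refine eval₂_ne_zero_of_riccati intPolyToLaurent_injective intPolyToLaurent_euler hDu H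
      (not_rational_riccati_bessel intPolyToLaurent_injective intPolyToLaurent_euler hDu) ?_
    intro h
    refine hP (funext fun i => ?_)
    rw [← ofFn_coeff_eq_val_of_lt P i.2, h]
    rfl
  refine det_twist_symMatrix_ne_zero hDu H hev ?_
  have h2 := congr_arg ψ hdet
  rw [map_zero, RingHom.map_det] at h2
  rw [← h2]
  congr 1
  ext1 i j
  have := map_twist_iterate ψ (eulerPoly ℤ) eulerLaurent intPolyToLaurent_euler (symMatrix q N) P i
  rw [hmap] at this
  simp only [Matrix.of_apply, RingHom.mapMatrix_apply, Matrix.map_apply, ← this]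
  rfl

end BesselJ

section ETypeClosure

lemma IsEType.mono {C B B' : ℕ} (h : B ≤ B') {f : PowerSeries ℚ} (hf : IsEType C B f) :
    IsEType C B' f := by
  intro k
  obtain ⟨a, ha, hk⟩ := hf k
  refine ⟨a, ha.trans ?_, hk⟩
  gcongr

lemma isEType_one (C : ℕ) : IsEType C 1 1 := by
  intro k
  rcases eq_or_ne k 0 with rfl | hk
  · exact ⟨1, by simp, by simp⟩
  · exact ⟨0, by simp, by simp [PowerSeries.coeff_one, hk]⟩

lemma IsEType.euler {C B : ℕ} {f : PowerSeries ℚ} (hf : IsEType C B f) :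
    IsEType C (2 * B) (eulerPS ℚ f) := by
  intro k
  obtain ⟨a, ha, hk⟩ := hf k
  refine ⟨k * a, ?_, ?_⟩
  · have h1 : (k : ℤ) ≤ 2 ^ (k + 1) := by
      exact_mod_cast (Nat.lt_two_pow_self.le.trans (Nat.pow_le_pow_right two_pos (Nat.le_succ k)))
    rw [abs_mul, Nat.abs_cast]
    push_cast
    rw [mul_pow]
    exact mul_le_mul h1 ha (abs_nonneg a) (by positivity)
  · rw [coeff_eulerPS, hk]
    push_cast
    ring

lemma IsEType.mul {C B B' : ℕ} (hC : 0 < C) (hB : 0 < B) (hB' : 0 < B') {f g : PowerSeries ℚ}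
    (hf : IsEType C B f) (hg : IsEType C B' g) : IsEType C (2 * B * B') (f * g) := by
  choose a ha hfa using hf
  choose b hb hgb using hg
  intro k
  refine ⟨∑ p ∈ Finset.HasAntidiagonal.antidiagonal k, (k.choose p.1 : ℤ) * (a p.1 * b p.2),
    ?_, ?_⟩
  · have hterm : ∀ p ∈ Finset.HasAntidiagonal.antidiagonal k,
        |(k.choose p.1 : ℤ) * (a p.1 * b p.2)| ≤
          (k.choose p.1 : ℤ) * ((B : ℤ) ^ (k + 1) * (B' : ℤ) ^ (k + 1)) := by
      intro p hp
      have hp' := Finset.HasAntidiagonal.mem_antidiagonal.mp hp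
      rw [abs_mul, Nat.abs_cast, abs_mul]
      have h1 : (1 : ℤ) ≤ B := by exact_mod_cast hB
      have h2 : (1 : ℤ) ≤ B' := by exact_mod_cast hB'
      have h3 : |a p.1| ≤ (B : ℤ) ^ (k + 1) := (ha _).trans (pow_le_pow_right₀ h1 (by omega))
      have h4 : |b p.2| ≤ (B' : ℤ) ^ (k + 1) := (hb _).trans (pow_le_pow_right₀ h2 (by omega))
      gcongr
    refine (Finset.abs_sum_le_sum_abs _ _).trans ((Finset.sum_le_sum hterm).trans ?_)
    rw [← Finset.sum_mul]
    have h5 : ∑ p ∈ Finset.HasAntidiagonal.antidiagonal k, (k.choose p.1 : ℤ) = 2 ^ k := by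
      rw [Finset.Nat.sum_antidiagonal_eq_sum_range_succ_mk]
      exact_mod_cast Nat.sum_range_choose k
    rw [h5]
    push_cast
    rw [mul_pow, mul_pow, mul_assoc]
    gcongr
    · norm_num
    · omega
  · rw [PowerSeries.coeff_mul]
    push_cast
    rw [Finset.sum_div]
    refine Finset.sum_congr rfl fun p hp => ?_
    have hp' := Finset.HasAntidiagonal.mem_antidiagonal.mp hp
    have hC' : (C : ℚ) ≠ 0 := by positivity
    have hch : (k.choose p.1 : ℚ) * (p.1.factorial * p.2.factorial) = k.factorial := by
      have := Nat.choose_mul_factorial_mul_factorial (show p.1 ≤ k by omega)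
      rw [show k - p.1 = p.2 by omega] at this
      rw [← mul_assoc]
      exact_mod_cast this
    have hp1 : (p.1.factorial : ℚ) ≠ 0 := by positivity
    have hp2 : (p.2.factorial : ℚ) ≠ 0 := by positivity
    have hk : (k.factorial : ℚ) ≠ 0 := by positivity
    rw [hfa, hgb, div_mul_div_comm, div_eq_div_iff (by positivity) (by positivity), ← hch,
      ← hp', pow_add]
    ring

lemma IsEType.exists_pow {C B : ℕ} (hC : 0 < C) (hB : 0 < B) {f : PowerSeries ℚ}
    (hf : IsEType C B f) (n : ℕ) : ∃ B', 0 < B' ∧ IsEType C B' (f ^ n) := by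
  induction n with
  | zero => exact ⟨1, one_pos, by simpa using isEType_one C⟩
  | succ n ih =>
    obtain ⟨B', hB', h⟩ := ih
    exact ⟨2 * B' * B, by positivity, by rw [pow_succ]; exact h.mul hC hB' hB hf⟩

end ETypeClosure

section IntegerOrder

lemma besselCoeff_eq (ν m : ℕ) : besselCoeff (2 * ν + 1) m *
    (2 ^ (ν + 2 * m) * (ν + 2 * m).factorial) =
      (-1) ^ m * ν.factorial * 2 ^ ν * (ν + 2 * m).choose m := by
  have hprod : (∏ j ∈ Finset.range m, ((2 * j + 2) * ((2 * ν + 1 : ℕ) + 2 * j + 1) : ℚ)) *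
      ν.factorial = 4 ^ m * m.factorial * (ν + m).factorial := by
    induction m with
    | zero => simp
    | succ m ih =>
      rw [Finset.prod_range_succ, mul_right_comm, ih, ← add_assoc, Nat.factorial_succ,
        Nat.factorial_succ]
      push_cast
      ring
  have hpos : (∏ j ∈ Finset.range m, ((2 * j + 2) * ((2 * ν + 1 : ℕ) + 2 * j + 1) : ℚ)) ≠ 0 :=
    Finset.prod_ne_zero_iff.mpr fun j _ => by positivity
  have hch : ((ν + 2 * m).choose m : ℚ) * (m.factorial * (ν + m).factorial) =
      (ν + 2 * m).factorial := by
    have := Nat.choose_mul_factorial_mul_factorial (show m ≤ ν + 2 * m by omega)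
    rw [show ν + 2 * m - m = ν + m by omega] at this
    rw [← mul_assoc]
    exact_mod_cast this
  rw [besselCoeff, div_mul_eq_mul_div, div_eq_iff hpos, ← hch, pow_add, pow_mul]
  rw [show (2 : ℚ) ^ 2 = 4 by norm_num]
  linear_combination (-((-1) ^ m * 2 ^ ν * ((ν + 2 * m).choose m : ℚ))) * hprod

lemma isEType_besselJPS (ν : ℕ) : IsEType 2 (ν.factorial * 2 ^ (ν + 1)) (besselJPS ν) := by
  intro k
  by_cases hk : ∃ m, k = ν + 2 * m
  · obtain ⟨m, rfl⟩ := hk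
    refine ⟨(-1) ^ m * ν.factorial * 2 ^ ν * (ν + 2 * m).choose m, ?_, ?_⟩
    · have h1 : (ν + 2 * m).choose m ≤ 2 ^ (ν + 2 * m + 1) :=
        (Nat.choose_le_two_pow _ _).trans (Nat.pow_le_pow_right two_pos (Nat.le_succ _))
      have h2 : ν.factorial * 2 ^ ν ≤ (ν.factorial * 2 ^ ν) ^ (ν + 2 * m + 1) :=
        Nat.le_self_pow (by omega) _
      have h3 : ν.factorial * 2 ^ ν * (ν + 2 * m).choose m ≤
          (ν.factorial * 2 ^ (ν + 1)) ^ (ν + 2 * m + 1) := by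
        rw [pow_succ 2, ← mul_assoc, mul_pow]
        exact Nat.mul_le_mul h2 h1
      simp only [abs_mul, abs_pow, abs_neg, abs_one, one_pow, one_mul, Nat.abs_cast, Nat.abs_ofNat]
      exact_mod_cast h3
    · rw [besselJPS, PowerSeries.coeff_X_pow_mul', if_pos (by omega), Nat.add_sub_cancel_left,
        coeff_besselPS_two_mul, eq_div_iff (by positivity)]
      push_cast
      exact besselCoeff_eq ν m
  · refine ⟨0, by simp; positivity, ?_⟩
    rw [besselJPS, PowerSeries.coeff_X_pow_mul']
    split_ifs with h
    · rcases Nat.even_or_odd' (k - ν) with ⟨m, hm | hm⟩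
      · exact absurd ⟨m, by omega⟩ hk
      · rw [hm, coeff_besselPS_odd]
        simp
    · simp

end IntegerOrder

section IntegerOrderTranscendence

lemma eulerPS_pow (f : PowerSeries ℚ) (n : ℕ) :
    eulerPS ℚ (f ^ n) = (n : PowerSeries ℚ) * f ^ (n - 1) * eulerPS ℚ f := by
  induction n with
  | zero => simp
  | succ n ih =>
    rw [pow_succ, RingDerivation.map_mul, ih, Nat.add_sub_cancel]
    cases n with
    | zero => simp
    | succ n =>
      rw [Nat.add_sub_cancel]
      push_cast
      ring

lemma eulerPS_besselMonomial (ν N : ℕ) (i : Fin (N + 1)) :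
    eulerPS ℚ (besselJPS ν ^ (N - i) * eulerPS ℚ (besselJPS ν) ^ (i : ℕ)) =
      ∑ j : Fin (N + 1), intPolyToPS (symMatrix (C ((ν : ℤ) ^ 2) - X ^ 2) N i j) *
        (besselJPS ν ^ (N - j) * eulerPS ℚ (besselJPS ν) ^ (j : ℕ)) := by
  obtain ⟨i, hi⟩ := i
  set q : ℤ[X] := C ((ν : ℤ) ^ 2) - X ^ 2 with hq
  set J := besselJPS ν with hJ
  set J' := eulerPS ℚ J with hJ'
  have hJJ : eulerPS ℚ J' = intPolyToPS q * J := eulerPS_eulerPS_besselJPS ν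
  simp only [symMatrix, Matrix.of_apply]
  rw [Fin.sum_univ_eq_sum_range (fun j => intPolyToPS ((if j = i + 1 then ((N : ℤ[X]) - i) else 0) +
    (if i = j + 1 then (i : ℤ[X]) * q else 0)) * (J ^ (N - j) * J' ^ j)) (N + 1)]
  simp only [map_add, apply_ite intPolyToPS, map_zero, add_mul, ite_mul, zero_mul,
    Finset.sum_add_distrib, map_mul, map_sub, map_natCast]
  rw [RingDerivation.map_mul, eulerPS_pow, eulerPS_pow, hJJ, ← hJ', add_comm]
  congr 1
  · rw [Finset.sum_ite_eq' (Finset.range (N + 1)) (i + 1)]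
    split_ifs with h
    · obtain ⟨k, hk⟩ := Nat.exists_eq_add_of_lt (Nat.lt_of_succ_lt_succ (Finset.mem_range.mp h))
      rw [hk, show i + k + 1 - i = k + 1 by omega, show i + k + 1 - (i + 1) = k by omega,
        Nat.add_sub_cancel]
      push_cast
      ring
    · rw [show N - i = 0 by rw [Finset.mem_range] at h; omega]
      simp
  · rcases i with _ | i
    · simp
    · simp only [Nat.add_right_cancel_iff]
      rw [Finset.sum_ite_eq (Finset.range (N + 1)) i, if_pos (Finset.mem_range.mpr (by omega)),
        Nat.add_sub_cancel, show N - i = N - (i + 1) + 1 by omega]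
      ring

lemma natDegree_symMatrix_le (ν N : ℕ) (i j : Fin (N + 1)) :
    (symMatrix (C ((ν : ℤ) ^ 2) - X ^ 2) N i j : ℤ[X]).natDegree ≤ 2 := by
  have hq : (C ((ν : ℤ) ^ 2) - X ^ 2 : ℤ[X]).natDegree ≤ 2 :=
    (natDegree_sub_le _ _).trans (max_le (by simp) (natDegree_X_pow_le 2))
  simp only [symMatrix, Matrix.of_apply]
  refine (natDegree_add_le _ _).trans (max_le ?_ ?_)
  · split_ifs
    · refine (natDegree_sub_le _ _).trans (max_le ?_ ?_) <;> simp
    · simp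
  · split_ifs
    · refine natDegree_mul_le.trans ?_
      rw [natDegree_natCast, zero_add]
      exact hq
    · simp

lemma psEval_besselJPS (ν : ℕ) (x : ℂ) :
    psEval x (besselJPS ν) = x ^ ν * psEval x (besselPS (2 * ν + 1)) :=
  psEval_X_pow_mul (psSummable_besselPS _ _) ν

lemma psEval_eulerPS_besselJPS (ν : ℕ) (x : ℂ) : psEval x (eulerPS ℚ (besselJPS ν)) =
    ν * psEval x (besselJPS ν) + x ^ ν * psEval x (eulerPS ℚ (besselPS (2 * ν + 1))) := by
  have hX : intPolyToPS (C ((ν : ℤ) * (2 * ν + 2))) =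
      PowerSeries.C (ν * (2 * ν + 2) : ℚ) := by
    ext k
    rw [coeff_intPolyToPS, coeff_C, PowerSeries.coeff_C]
    split_ifs <;> simp
  have hXs := psSummable_intPoly x (X ^ (ν + 2))
  rw [map_pow, intPolyToPS_X] at hXs
  have h := congr_arg (psEval x) (show PowerSeries.C (2 * ν + 2 : ℚ) * eulerPS ℚ (besselJPS ν) =
      intPolyToPS (C ((ν : ℤ) * (2 * ν + 2))) * besselJPS ν -
        PowerSeries.X ^ (ν + 2) * besselPS (2 * ν + 1 + 2) by
    have h1 := eulerPS_besselPS (2 * ν + 1)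
    have h2 : ((2 * ν + 1 : ℕ) + 1 : ℚ) = 2 * ν + 2 := by push_cast; ring
    rw [h2] at h1
    rw [hX, eulerPS_besselJPS, map_mul, map_natCast]
    linear_combination PowerSeries.X ^ ν * h1)
  have hJ : PSSummable x (besselJPS ν) := (isEType_besselJPS ν).summable two_pos x
  rw [psEval_C_mul, psEval_sub ((psSummable_intPoly x _).mul hJ)
    (hXs.mul (psSummable_besselPS _ _)), hX, psEval_C_mul,
    psEval_X_pow_mul (psSummable_besselPS _ _)] at h
  have h3 := psEval_eulerPS_besselPS (2 * ν + 1) x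
  have h4 : (2 * ν + 2 : ℂ) ≠ 0 := by exact_mod_cast (by omega : 2 * ν + 2 ≠ 0)
  refine mul_left_cancel₀ h4 ?_
  push_cast at h h3
  linear_combination h - x ^ ν * h3

lemma psEval_pow {x : ℂ} {f : PowerSeries ℚ} (hf : PSSummable x f) (n : ℕ) :
    PSSummable x (f ^ n) ∧ psEval x (f ^ n) = psEval x f ^ n := by
  induction n with
  | zero =>
    have h := psSummable_intPoly x 1
    have h' := psEval_intPoly x 1
    rw [map_one] at h h'
    exact ⟨by simpa using h, by simpa using h'⟩
  | succ n ih => exact ⟨by rw [pow_succ]; exact ih.1.mul hf, by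
      rw [pow_succ, psEval_mul ih.1 hf, ih.2, pow_succ]⟩

/-- A nonzero point where the logarithmic derivative of a Bessel function of integer order takes a
natural number as value is transcendental. -/
theorem transcendental_of_logDeriv_besselJPS {ν s : ℕ} {x : ℂ} (hx : x ≠ 0)
    (hJ : psEval x (besselJPS ν) ≠ 0)
    (hs : psEval x (eulerPS ℚ (besselJPS ν)) = s * psEval x (besselJPS ν)) :
    Transcendental ℚ x := by
  intro halg
  let K := IntermediateField.adjoin ℚ ({x} : Set ℂ)
  have : FiniteDimensional ℚ K := IntermediateField.adjoin.finiteDimensional halg.isIntegral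
  have : NumberField K := {}
  let ρ : K := ⟨x, IntermediateField.subset_adjoin ℚ _ (by simp)⟩
  have hρ : ρ ≠ 0 := fun h => hx (congr_arg Subtype.val h)
  set δ := Module.finrank ℚ K with hδ
  set N := (δ + 2) * (δ ^ 2 + δ + 1) with hN
  set J := besselJPS ν with hJdef
  set B₀ := ν.factorial * 2 ^ (ν + 1) with hB₀
  have hB₀pos : 0 < B₀ := by positivity
  have hEJ : IsEType 2 B₀ J := isEType_besselJPS ν
  have hE : ∀ i : Fin (N + 1), ∃ B, 0 < B ∧ IsEType 2 B (J ^ (N - i) * eulerPS ℚ J ^ (i : ℕ)) := by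
    intro i
    obtain ⟨B₁, h1, h1'⟩ := hEJ.exists_pow two_pos hB₀pos (N - i)
    obtain ⟨B₂, h2, h2'⟩ := hEJ.euler.exists_pow two_pos (by positivity) i
    exact ⟨2 * B₁ * B₂, by positivity, h1'.mul two_pos h1 h2 h2'⟩
  choose B hB hE using hE
  obtain ⟨o, ho⟩ : ∃ o, PowerSeries.coeff o (J ^ N) ≠ 0 := by
    by_contra! h
    exact pow_ne_zero N (besselJPS_ne_zero ν) (PowerSeries.ext (by simpa using h))
  refine siegel_method (ι := Fin (N + 1)) (A := symMatrix (C ((ν : ℤ) ^ 2) - X ^ 2) N)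
    (Y := fun i => J ^ (N - i) * eulerPS ℚ J ^ (i : ℕ)) (D := 2) (B := ∑ i, B i) two_pos
    (Finset.sum_pos (fun i _ => hB i) ⟨0, Finset.mem_univ _⟩)
    (fun i => (hE i).mono (Finset.single_le_sum (fun i _ => (hB i).le) (Finset.mem_univ i)))
    (eulerPS_besselMonomial ν N) (algebraMap K ℂ).toRatAlgHom (ρ := ρ)
    (w := fun i => (s : K) ^ (i : ℕ)) (c := psEval x J ^ N) (pow_ne_zero N hJ) (fun i => ?_)
    hδ.symm (by simp [hN]) (c₁ := (N + 1) * (2 * N) + o + N) fun P n T t hP0 hPn hPT hPt => ?_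
  · have h1 := psEval_pow (hEJ.summable two_pos x) (N - i)
    have h2 := psEval_pow (hEJ.euler.summable two_pos x) i
    change psEval x _ = _
    rw [psEval_mul h1.1 h2.1, h1.2, h2.2, hs, mul_pow, mul_left_comm, ← pow_add,
      Nat.sub_add_cancel (Nat.lt_succ_iff.mp i.2), mul_comm, map_pow, map_natCast]
  · have key := zero_estimate (ι := Fin (N + 1)) (P := P) (T := T) (t := t) (n := n) (a := 2) (c := N) hρ (natDegree_symMatrix_le ν N) hPn
      (fun i => i) (fun i => Nat.lt_succ_iff.mp i.2) (det_twist_besselMatrix_ne_zero ν N hP0)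
      (eulerPS_besselMonomial ν N) (j₀ := 0) (o := o) (by simpa using ho) hPT (j₁ := 0)
      (w := fun i => (s : K) ^ (i : ℕ)) (by simp) hPt
    rw [Fintype.card_fin] at key ⊢
    linarith

end IntegerOrderTranscendence

section Main

lemma transcendental_of_deriv_Xi_eq_zero_of_even {e ℓ : ℕ} {r : ℝ} (hr : 0 < r) (he : Even e)
    (h : deriv (Xi (e + 2) ℓ) r = 0) : Transcendental ℚ r := by
  obtain ⟨s, rfl⟩ := he
  have hx : (r : ℂ) ≠ 0 := by exact_mod_cast hr.ne'
  have h' := psEval_eulerPS_of_deriv_Xi_eq_zero hr h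
  have hp : 2 * ℓ + (s + s) + 1 = 2 * (ℓ + s) + 1 := by ring
  rw [hp] at h'
  have hE : psEval r (besselPS (2 * (ℓ + s) + 1)) ≠ 0 := by
    refine psEval_besselPS_ne_zero hx fun h0 => ?_
    have h1 := psEval_eulerPS_besselPS (2 * (ℓ + s) + 1) r
    rw [h', h0, mul_zero, neg_zero, mul_zero, eq_comm, neg_eq_zero] at h1
    exact (mul_eq_zero.mp h1).resolve_left (pow_ne_zero 2 hx)
  have hxJ := psEval_besselJPS (ℓ + s) r
  have htr : Transcendental ℚ (r : ℂ) := by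
    refine transcendental_of_logDeriv_besselJPS (ν := ℓ + s) (s := s) hx ?_ ?_
    · rw [hxJ]
      exact mul_ne_zero (pow_ne_zero _ hx) hE
    · rw [psEval_eulerPS_besselJPS, h', hxJ]
      push_cast
      ring
  exact fun halg => htr (halg.algebraMap (A := ℂ))

lemma transcendental_of_deriv_Xi_eq_zero_of_odd {e ℓ : ℕ} {r : ℝ} (hr : 0 < r) (he : Odd e)
    (h : deriv (Xi (e + 2) ℓ) r = 0) : Transcendental ℚ r := by
  intro halg
  obtain ⟨s, rfl⟩ := he
  have h' := psEval_eulerPS_of_deriv_Xi_eq_zero hr h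
  rw [show 2 * ℓ + (2 * s + 1) + 1 = 2 * (ℓ + s + 1) by ring] at h'
  have hrel := psEval_eulerPS_besselPS (2 * (ℓ + s + 1)) r
  rw [h'] at hrel
  obtain ⟨a, b, a', b', ⟨ha, hb, ha', hb'⟩, hdet, h1, h2⟩ :=
    exists_psEval_besselPS_two_mul hr.ne' halg (ℓ + s + 1)
  rw [h1, h2] at hrel
  set m : ℝ := ℓ * (2 * (ℓ + s + 1) + 1) with hm
  have hmalg : IsAlgebraic ℚ m := by
    have : m = ((ℓ * (2 * (ℓ + s + 1) + 1) : ℕ) : ℝ) := by rw [hm]; push_cast; ring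
    rw [this]
    exact isAlgebraic_natCast _
  refine not_isAlgebraic_of_cos_sin_relation (A := r ^ 2 * a' - m * a) (B := r ^ 2 * b' - m * b)
    hr.ne' (((halg.pow 2).mul ha').sub (hmalg.mul ha)) (((halg.pow 2).mul hb').sub (hmalg.mul hb))
    ?_ ?_ halg
  · by_contra! h0
    refine hdet ((mul_eq_zero.mp ?_).resolve_left (pow_ne_zero 2 hr.ne'))
    linear_combination a * h0.2 - b * h0.1
  · rw [hm]
    push_cast at hrel ⊢
    linear_combination hrel

end Main

theorem Xi_deriv_zero_transcendental (d ℓ : ℕ) (hd : 2 ≤ d) (r : ℝ) (hr : 0 < r)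
    (hzero : deriv (Xi d ℓ) r = 0) : Transcendental ℚ r := by
  obtain ⟨e, rfl⟩ := Nat.exists_eq_add_of_le' hd
  rcases Nat.even_or_odd e with he | he
  · exact transcendental_of_deriv_Xi_eq_zero_of_even hr he hzero
  · exact transcendental_of_deriv_Xi_eq_zero_of_odd hr he hzero
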